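/- arXiv:1901.05368 — 4 statements merged into one kernel-verified Lean document; each statement's English description precedes it below -/
import Mathlib

section
/- Let p be a prime and let k' be a finite Galois extension of Q_p. Then every field automorphism of k' fixes Q_p pointwise. In particular, Q_p is a rigid field. -/
/-- Roots of `1 + p x` of order `m` prime to `p`, by Hensel's lemma. -/
lemma exists_root_one_add (p : ℕ) [Fact p.Prime] (x : ℤ_[p]) (m : ℕ) (hm : p.Coprime m) :
    ∃ z : ℤ_[p], z ^ m = 1 + p * x := by
  have h := hensels_lemma (p := p) (R := ℤ_[p])
    (F := (Polynomial.X ^ m - Polynomial.C (1 + p * x) : Polynomial ℤ_[p])) (a := 1) (by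
      have h1 : ‖(m : ℤ_[p])‖ = 1 := PadicInt.norm_natCast_eq_one_iff.2 hm
      have h2 : ‖(p : ℤ_[p]) * x‖ < 1 := (PadicInt.norm_lt_one_iff_dvd _).2 (dvd_mul_right _ _)
      simpa [h1, Polynomial.derivative_X_pow] using h2)
  obtain ⟨z, hz, -⟩ := h
  refine ⟨z, ?_⟩
  simp only [map_sub, map_pow, Polynomial.aeval_X, Polynomial.aeval_C] at hz
  simpa using sub_eq_zero.1 hz

/-- The value group of the spectral norm is discrete. -/
lemma spectral_discrete (p : ℕ) [Fact p.Prime]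
    (K : Type*) [Field K] [Algebra ℚ_[p] K] [FiniteDimensional ℚ_[p] K] (a : K) (ha : a ≠ 0) :
    ∃ z : ℤ, spectralNorm ℚ_[p] K a ^ (Module.finrank ℚ_[p] K) = (p : ℝ) ^ z := by
  have hint : IsIntegral ℚ_[p] a := Algebra.IsIntegral.isIntegral a
  obtain ⟨d, hd⟩ := minpoly.degree_dvd hint
  have hc : (minpoly ℚ_[p] a).coeff 0 ≠ 0 := minpoly.coeff_zero_ne_zero hint ha
  have hn : ((minpoly ℚ_[p] a).natDegree : ℝ) ≠ 0 := by
    exact_mod_cast (minpoly.natDegree_pos hint).ne'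
  have h1 : spectralNorm ℚ_[p] K a ^ (minpoly ℚ_[p] a).natDegree
      = ‖(minpoly ℚ_[p] a).coeff 0‖ := by
    rw [spectralNorm.spectralNorm_eq_norm_coeff_zero_rpow, ← Real.rpow_natCast,
      ← Real.rpow_mul (norm_nonneg _), one_div, inv_mul_cancel₀ hn, Real.rpow_one]
  rw [hd, pow_mul, h1, Padic.norm_eq_zpow_neg_valuation hc]
  exact ⟨_, (zpow_mul _ _ (d : ℤ)).symm⟩

lemma spectral_mul (p : ℕ) [Fact p.Prime]
    (K : Type*) [Field K] [Algebra ℚ_[p] K] [FiniteDimensional ℚ_[p] K] (a b : K) :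
    spectralNorm ℚ_[p] K (a * b) = spectralNorm ℚ_[p] K a * spectralNorm ℚ_[p] K b :=
  spectralAlgNorm_mul a b

lemma spectral_pow (p : ℕ) [Fact p.Prime]
    (K : Type*) [Field K] [Algebra ℚ_[p] K] [FiniteDimensional ℚ_[p] K] (a : K) (n : ℕ) :
    spectralNorm ℚ_[p] K (a ^ n) = spectralNorm ℚ_[p] K a ^ n :=
  map_pow (spectralMulAlgNorm ℚ_[p] K) a n

lemma spectral_sub (p : ℕ) [Fact p.Prime]
    (K : Type*) [Field K] [Algebra ℚ_[p] K] [FiniteDimensional ℚ_[p] K] (a b : K) :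
    spectralNorm ℚ_[p] K (a - b) ≤ max (spectralNorm ℚ_[p] K a) (spectralNorm ℚ_[p] K b) := by
  have h := isNonarchimedean_spectralNorm (K := ℚ_[p]) (L := K) a (-b)
  rwa [spectralNorm_neg (Algebra.IsAlgebraic.isAlgebraic b), ← sub_eq_add_neg] at h

/-- A nonzero element with `m`-th roots for all `m` prime to `p` has norm one. -/
lemma spectral_eq_one (p : ℕ) [Fact p.Prime]
    (K : Type*) [Field K] [Algebra ℚ_[p] K] [FiniteDimensional ℚ_[p] K] (u : K) (hu : u ≠ 0)
    (h : ∀ m : ℕ, p.Coprime m → ∃ b : K, b ^ m = u) : spectralNorm ℚ_[p] K u = 1 := by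
  have hp1 : (1 : ℝ) < p := by exact_mod_cast (Fact.out : p.Prime).one_lt
  obtain ⟨z, hz⟩ := spectral_discrete p K u hu
  have hp0 : 0 < p := (Fact.out : p.Prime).pos
  have hcop : p.Coprime (p * z.natAbs + 1) := by simp
  obtain ⟨b, hb⟩ := h _ hcop
  have hb0 : b ≠ 0 := by
    rintro rfl
    rw [zero_pow (by omega)] at hb
    exact hu hb.symm
  obtain ⟨t, ht⟩ := spectral_discrete p K b hb0
  have hzt : z = t * ((p * z.natAbs + 1 : ℕ) : ℤ) := by
    apply zpow_right_injective₀ (zero_lt_one.trans hp1) hp1.ne'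
    change (p : ℝ) ^ z = (p : ℝ) ^ (t * ((p * z.natAbs + 1 : ℕ) : ℤ))
    rw [← hz, ← hb, spectral_pow, ← pow_mul, mul_comm, pow_mul, ht, zpow_mul, zpow_natCast]
  have hz0 : z = 0 := by
    apply Int.eq_zero_of_abs_lt_dvd (m := ((p * z.natAbs + 1 : ℕ) : ℤ)) ⟨t, by rw [mul_comm]; exact hzt⟩
    have : z.natAbs < p * z.natAbs + 1 := Nat.lt_succ_of_le (Nat.le_mul_of_pos_left _ hp0)
    rw [Int.abs_eq_natAbs]
    exact_mod_cast this
  rw [hz0, zpow_zero] at hz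
  exact (pow_eq_one_iff_of_nonneg (spectralNorm_nonneg _) Module.finrank_pos.ne').1 hz

lemma fixes_int (p : ℕ) [Fact p.Prime]
    (K : Type*) [Field K] [Algebra ℚ_[p] K] [FiniteDimensional ℚ_[p] K] (σ : K ≃+* K)
    (x : ℤ_[p]) : σ (algebraMap ℚ_[p] K x) = algebraMap ℚ_[p] K x := by
  have hp1 : (1 : ℝ) < p := by exact_mod_cast (Fact.out : p.Prime).one_lt
  have hpp : spectralNorm ℚ_[p] K (p : K) = (p : ℝ)⁻¹ := by
    rw [← map_natCast (algebraMap ℚ_[p] K), spectralNorm_extends, Padic.norm_p]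
  have key : ∀ y : ℤ_[p], spectralNorm ℚ_[p] K (σ (algebraMap ℚ_[p] K y)) ≤ p := by
    intro y
    have h1 : spectralNorm ℚ_[p] K (1 + p * σ (algebraMap ℚ_[p] K y)) = 1 := by
      have e : ∀ m : ℕ, p.Coprime m → ∃ b : K, b ^ m = 1 + p * σ (algebraMap ℚ_[p] K y) := by
        intro m hm
        obtain ⟨z, hz⟩ := exists_root_one_add p y m hm
        refine ⟨σ (algebraMap ℚ_[p] K z), ?_⟩
        have hz' : (z : ℚ_[p]) ^ m = 1 + p * y := by exact_mod_cast congrArg Subtype.val hz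
        rw [← map_pow, ← map_pow, hz']
        simp
      refine spectral_eq_one p K _ ?_ e
      intro h0
      have h0' : σ (algebraMap ℚ_[p] K (1 + p * y)) = 0 := by simpa using h0
      have h2 : (1 + p * y : ℚ_[p]) = 0 := by simpa only [map_eq_zero] using h0'
      have h3 : (1 + p * y : ℤ_[p]) = 0 := by
        apply Subtype.ext
        push_cast
        exact h2
      have : (p : ℤ_[p]) ∣ 1 := ⟨-y, by linear_combination h3⟩
      rw [← PadicInt.norm_lt_one_iff_dvd] at this
      simp at this
    have h2 := spectral_sub p K (1 + p * σ (algebraMap ℚ_[p] K y)) 1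
    rw [h1, spectralNorm_one, add_sub_cancel_left, spectral_mul, hpp, max_self] at h2
    rwa [inv_mul_le_iff₀ (by linarith), mul_one] at h2
  have key2 : ∀ y : ℤ_[p], spectralNorm ℚ_[p] K
      (σ (algebraMap ℚ_[p] K y) - algebraMap ℚ_[p] K y) ≤ p := by
    intro y
    refine (spectral_sub p K _ _).trans (max_le (key y) ?_)
    rw [spectralNorm_extends]
    exact (PadicInt.norm_le_one y).trans hp1.le
  have bound : ∀ k : ℕ, spectralNorm ℚ_[p] K
      (σ (algebraMap ℚ_[p] K x) - algebraMap ℚ_[p] K x) ≤ (p : ℝ)⁻¹ ^ k * p := by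
    intro k
    obtain ⟨y, hy⟩ := Ideal.mem_span_singleton.1 (PadicInt.appr_spec k x)
    have hx : (x : ℚ_[p]) = (x.appr k : ℕ) + (p : ℚ_[p]) ^ k * y := by
      have : x = (x.appr k : ℕ) + (p : ℤ_[p]) ^ k * y := by rw [← hy]; ring
      exact_mod_cast congrArg Subtype.val this
    have e : σ (algebraMap ℚ_[p] K x) - algebraMap ℚ_[p] K x
        = (p : K) ^ k * (σ (algebraMap ℚ_[p] K y) - algebraMap ℚ_[p] K y) := by
      rw [hx]
      simp only [map_add, map_mul, map_pow, map_natCast]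
      ring
    rw [e, spectral_mul, spectral_pow, hpp]
    exact mul_le_mul_of_nonneg_left (key2 y) (by positivity)
  have lim : Filter.Tendsto (fun k : ℕ => (p : ℝ)⁻¹ ^ k * p) Filter.atTop (nhds 0) := by
    have := (tendsto_pow_atTop_nhds_zero_of_lt_one (r := (p : ℝ)⁻¹) (by positivity)
      (inv_lt_one_of_one_lt₀ hp1)).mul_const (p : ℝ)
    rwa [zero_mul] at this
  have h0 := ge_of_tendsto' lim bound
  exact sub_eq_zero.1 (eq_zero_of_map_spectralNorm_eq_zero
    (le_antisymm h0 (spectralNorm_nonneg _)) (Algebra.IsAlgebraic.isAlgebraic (R := ℚ_[p]) _))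

/-- Let `p` be a prime and `k'` a finite Galois extension of `ℚ_p`. Then every
field automorphism of `k'` fixes `ℚ_p` pointwise. In particular (since this holds for every
finite Galois extension of `ℚ_p`, and such extensions are never algebraically closed), `ℚ_p`
is a rigid field. -/
theorem padic_rigid (p : ℕ) [Fact p.Prime]
    (k' : Type*) [Field k'] [Algebra ℚ_[p] k'] [FiniteDimensional ℚ_[p] k'] [IsGalois ℚ_[p] k']
    (σ : k' ≃+* k') :
    ∀ x : ℚ_[p], σ (algebraMap ℚ_[p] k' x) = algebraMap ℚ_[p] k' x := by
  intro x
  rcases le_total ‖x‖ 1 with h | h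
  · exact fixes_int p k' σ ⟨x, h⟩
  · have h1 : ‖x⁻¹‖ ≤ 1 := by
      rw [norm_inv]
      exact inv_le_one_of_one_le₀ h
    have h2 : σ (algebraMap ℚ_[p] k' x⁻¹) = algebraMap ℚ_[p] k' x⁻¹ :=
      fixes_int p k' σ ⟨x⁻¹, h1⟩
    rw [map_inv₀, map_inv₀] at h2
    exact inv_injective h2
end

section
/- Let K = F_{p^i}((T)), let q be a prime, and let a ∈ ℕ. There exists a subfield K' ≤ K such that K/K' is a finite Galois extension with q^a dividing [K:K'] if and only if q = p or q^a divides i(p^i − 1). -/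
namespace GSL
open PowerSeries

theorem exists_fixed {F : Type*} [Field F] (c : F⟦X⟧) (R : Polynomial F⟦X⟧) :
    ∃ x : F⟦X⟧, x = c + X * R.eval x := by
  let s : ℕ → F⟦X⟧ := fun n => Nat.rec c (fun _ y => c + X * R.eval y) n
  have hs : ∀ n, s (n+1) = c + X * R.eval (s n) := fun n => rfl
  have h1 : ∀ n, (X : F⟦X⟧)^n ∣ s (n+1) - s n := by
    intro n
    induction n with
    | zero => simp
    | succ n ih =>
      rw [hs (n+1), hs n]
      have : c + X * R.eval (s (n+1)) - (c + X * R.eval (s n))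
        = X * (R.eval (s (n+1)) - R.eval (s n)) := by ring
      rw [this, pow_succ']
      exact mul_dvd_mul_left _ (ih.trans (Polynomial.sub_dvd_eval_sub _ _ _))
  have h2 : ∀ m k, (X : F⟦X⟧)^m ∣ s (m+k) - s m := by
    intro m k
    induction k with
    | zero => simp
    | succ k ih =>
      have := dvd_add ((pow_dvd_pow X (Nat.le_add_right m k)).trans (h1 (m+k))) ih
      simpa [add_assoc] using this
  let x : F⟦X⟧ := PowerSeries.mk fun n => coeff n (s (n+1))
  have hx : ∀ n, (X : F⟦X⟧)^n ∣ x - s n := by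
    intro n
    rw [X_pow_dvd_iff]
    intro j hj
    obtain ⟨k, rfl⟩ := Nat.exists_eq_add_of_le (Nat.succ_le_of_lt hj)
    have := (X_pow_dvd_iff.1 (h2 (j+1) k)) j (Nat.lt_succ_self j)
    rw [map_sub, sub_eq_zero] at this
    simp only [x, map_sub, coeff_mk, Nat.succ_eq_add_one, this, sub_self]
  refine ⟨x, ?_⟩
  rw [← sub_eq_zero]
  ext n
  have h3 : (X : F⟦X⟧)^(n+1) ∣ x - (c + X * R.eval x) := by
    have e : x - (c + X * R.eval x) = (x - s (n+1)) + X * (R.eval (s n) - R.eval x) := by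
      rw [hs]; ring
    rw [e]
    refine dvd_add (hx _) ?_
    rw [pow_succ']
    refine mul_dvd_mul_left _ (Dvd.dvd.trans ?_ (Polynomial.sub_dvd_eval_sub _ _ _))
    rw [← neg_sub, dvd_neg]; exact hx n
  simpa using (X_pow_dvd_iff.1 h3) n (Nat.lt_succ_self n)

theorem prod_one_sub {A ι : Type*} [CommRing A] (t : A) (f : ι → A) (s : Finset ι) :
    ∃ R, ∏ v ∈ s, (1 - t * f v) = 1 + t * R := by
  classical
  induction s using Finset.induction_on with
  | empty => exact ⟨0, by simp⟩
  | insert a s ha ih =>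
    obtain ⟨R, hR⟩ := ih
    exact ⟨R - f a - t * f a * R, by rw [Finset.prod_insert ha, hR]; ring⟩

section wild
variable {F : Type*} [Field F] {V : Type*} [Fintype V]
  (P : V → Polynomial F)

/-- evaluation of the polynomial attached to `v` -/
noncomputable def ev (v : V) (x : F⟦X⟧) : F⟦X⟧ := Polynomial.aeval x (P v)

theorem solve (N : ℕ) (t : F⟦X⟧) : ∃ R : Polynomial F⟦X⟧, ∀ x : F⟦X⟧,
    x * ∏ v, (1 - t * ev P v x) - t ^ N = x - (t^N + t * R.eval x) := by
  obtain ⟨R, hR⟩ := prod_one_sub (Polynomial.C t : Polynomial F⟦X⟧)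
    (fun v => (P v).map (algebraMap F F⟦X⟧)) (Finset.univ : Finset V)
  refine ⟨- Polynomial.X * R, fun x => ?_⟩
  have h := congrArg (Polynomial.eval x) hR
  simp only [Polynomial.eval_prod, Polynomial.eval_sub, Polynomial.eval_one, Polynomial.eval_mul,
    Polynomial.eval_C, Polynomial.eval_add, Polynomial.eval_map_algebraMap] at h
  simp only [ev, h, Polynomial.eval_mul, Polynomial.eval_neg, Polynomial.eval_X]
  ring

theorem exists_sol (N : ℕ) : ∃ x : F⟦X⟧, x * ∏ v, (1 - X * ev P v x) = X ^ N := by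
  obtain ⟨R, hR⟩ := solve P N X
  obtain ⟨x, hx⟩ := exists_fixed (X^N) R
  exact ⟨x, by rw [← sub_eq_zero, hR, sub_eq_zero]; exact hx⟩

theorem unique_sol (N : ℕ) (t : F⟦X⟧) (ht : X ∣ t) (x y : F⟦X⟧)
    (hx : x * ∏ v, (1 - t * ev P v x) = t ^ N) (hy : y * ∏ v, (1 - t * ev P v y) = t ^ N) :
    x = y := by
  obtain ⟨R, hR⟩ := solve P N t
  rw [← sub_eq_zero, hR, sub_eq_zero] at hx hy
  obtain ⟨c, hc⟩ := Polynomial.sub_dvd_eval_sub x y R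
  have h : (x - y) * (1 - t * c) = 0 := by
    have : x - y = t * (R.eval x - R.eval y) := by
      linear_combination hx - hy
    rw [hc] at this
    linear_combination this
  rcases mul_eq_zero.1 h with h | h
  · exact sub_eq_zero.1 h
  · exfalso
    have h0 := congrArg constantCoeff h
    rw [X_dvd_iff] at ht
    simp [ht] at h0

theorem wild_action [AddCommGroup V] (hP : ∀ v w, P (v + w) = P v + P w) (hinj : Function.Injective P)
    (hV : ∀ v, P v ≠ 0 → ∃ k w, P v = Polynomial.X ^ k * w ∧ w.coeff 0 ≠ 0) :
    ∃ ρ : Multiplicative V →* (F⟦X⟧ ≃+* F⟦X⟧), Function.Injective ρ := by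
  classical
  have hP0 : P 0 = 0 := by simpa using hP 0 0
  have hPs : ∀ v w, P (v - w) = P v - P w := fun v w => by
    rw [eq_sub_iff_add_eq, ← hP, sub_add_cancel]
  obtain ⟨x, hx⟩ := exists_sol P (Fintype.card V)
  have hadd : ∀ v w y, ev P (v + w) y = ev P v y + ev P w y := fun v w y => by simp [ev, hP]
  have hsub : ∀ v w y, ev P (v - w) y = ev P v y - ev P w y := fun v w y => by simp [ev, hPs]
  have h0 : ev P 0 x = 0 := by simp [ev, hP0]
  have hN : Fintype.card V ≠ 0 := Fintype.card_ne_zero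
  have hx0 : x ≠ 0 := by
    rintro rfl
    rw [zero_mul] at hx
    exact pow_ne_zero _ X_ne_zero hx.symm
  have hxc : constantCoeff x = 0 := by
    have := congrArg constantCoeff hx
    simpa [hN] using this
  have hev : ∀ v, ev P v x = 0 → v = 0 := by
    intro v hv
    by_contra hne
    obtain ⟨k, w, h1, h2⟩ := hV v (fun h => hne (hinj (h.trans hP0.symm)))
    rw [ev, h1, map_mul, map_pow, Polynomial.aeval_X] at hv
    rcases mul_eq_zero.1 hv with h | h
    · exact pow_ne_zero k hx0 h
    · apply h2
      have := congrArg constantCoeff h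
      rw [Polynomial.aeval_def, Polynomial.hom_eval₂, hxc, Polynomial.eval₂_at_zero] at this
      simpa using this
  let u : V → F⟦X⟧ := fun v => 1 + X * ev P v x
  have hu : ∀ v, constantCoeff (u v) = 1 := fun v => by simp [u]
  have hu0 : ∀ v, u v ≠ 0 := fun v h => by
    have := hu v; rw [h] at this; simp at this
  let T : V → F⟦X⟧ := fun v => X * (u v)⁻¹
  have hT : ∀ v, T v * u v = X := fun v => by
    simp only [T]; rw [mul_assoc, PowerSeries.inv_mul_cancel _ (by simp [hu]), mul_one]
  have hTX : ∀ v, X ∣ T v := fun v => dvd_mul_right _ _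
  have hS : ∀ v, HasSubst (T v) := fun v => HasSubst.of_constantCoeff_zero' (X_dvd_iff.1 (hTX v))
  let σ : V → (F⟦X⟧ →ₐ[F] F⟦X⟧) := fun v => substAlgHom (hS v)
  have hσX : ∀ v, σ v X = T v := fun v => substAlgHom_X (hS v)
  have hσev : ∀ v w y, σ v (ev P w y) = ev P w (σ v y) := fun v w y => by
    simp only [ev]; rw [Polynomial.aeval_algHom_apply]
  have hσx : ∀ v, σ v x = x := by
    intro v
    refine unique_sol P (Fintype.card V) (T v) (hTX v) _ _ ?_ ?_
    · have := congrArg (σ v) hx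
      rw [map_mul, map_prod, map_pow] at this
      simpa only [map_sub, map_one, map_mul, hσX, hσev] using this
    · apply mul_right_cancel₀ (pow_ne_zero (Fintype.card V) (hu0 v))
      rw [← mul_pow, hT, mul_assoc]
      have ec : u v ^ Fintype.card V = ∏ _w : V, u v := by
        rw [Finset.prod_const, Finset.card_univ]
      rw [ec, ← Finset.prod_mul_distrib]
      rw [← hx]
      congr 1
      rw [← Equiv.prod_comp (Equiv.addRight v)]
      apply Finset.prod_congr rfl
      intro w _
      have e := hT v
      simp only [Equiv.coe_addRight, hadd]
      have e2 : u v = 1 + X * ev P v x := rfl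
      linear_combination (-(ev P w x + ev P v x)) * e + e2
  have hσT : ∀ v w, σ v (T w) = T (v + w) := by
    intro v w
    have h1 := congrArg (σ v) (hT w)
    simp only [u, map_mul, map_add, map_one, hσX, hσev, hσx] at h1
    apply mul_right_cancel₀ (hu0 (v + w))
    rw [hT]
    have e := hT v
    have e1 : u (v+w) = u v + X * ev P w x := by simp only [u, hadd]; ring
    rw [e1]
    linear_combination (u v) * h1 + (1 - σ v (T w) * ev P w x) * e
  have hcomp : ∀ v w f, σ v (σ w f) = σ (v + w) f := by
    intro v w f
    have := subst_comp_subst_apply (hS w) (hS v) f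
    simp only [σ, coe_substAlgHom] at *
    rw [this]
    have h2 := hσT v w
    rw [h2]
  have hT0 : T 0 = X := by
    have := hT 0
    simpa [u, h0] using this
  have hσ0 : ∀ f, σ 0 f = f := by
    intro f
    simp only [σ, coe_substAlgHom, hT0]
    exact X_subst f
  let e : V → (F⟦X⟧ ≃+* F⟦X⟧) := fun v =>
    RingEquiv.ofRingHom (σ v : F⟦X⟧ →+* F⟦X⟧) (σ (-v) : F⟦X⟧ →+* F⟦X⟧)
      (RingHom.ext fun f => by simp [hcomp, hσ0]) (RingHom.ext fun f => by simp [hcomp, hσ0])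
  have he : ∀ v f, e v f = σ v f := fun v f => rfl
  refine ⟨{ toFun := fun v => e v.toAdd, map_one' := ?_, map_mul' := ?_ }, ?_⟩
  · ext1 f; simp [he, hσ0]
  · intro v w; ext1 f; simp [he, hcomp]
  · intro v w h
    have h1 : T v.toAdd = T w.toAdd := by
      rw [← hσX, ← hσX, ← he, ← he]
      exact DFunLike.congr_fun h X
    have h2 : u v.toAdd = u w.toAdd := by
      have a1 := hT v.toAdd
      rw [← hT w.toAdd, h1] at a1
      refine mul_left_cancel₀ ?_ a1
      intro h
      have := hT w.toAdd
      rw [h, zero_mul] at this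
      exact X_ne_zero this.symm
    have h3 : ev P v.toAdd x = ev P w.toAdd x := by
      simp only [u] at h2
      exact mul_left_cancel₀ X_ne_zero (add_left_cancel h2)
    have h4 := hev (v.toAdd - w.toAdd) (by rw [hsub, h3, sub_self])
    exact Multiplicative.toAdd.injective (sub_eq_zero.1 h4)

end wild

theorem exists_subfield {F : Type*} [Field F] {G : Type*} [Group G] [Finite G]
    (ρ : G →* (F⟦X⟧ ≃+* F⟦X⟧)) (hρ : Function.Injective ρ) :
    ∃ K' : Subfield (LaurentSeries F), FiniteDimensional ↥K' (LaurentSeries F) ∧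
        IsGalois ↥K' (LaurentSeries F) ∧ Module.finrank ↥K' (LaurentSeries F) = Nat.card G := by
  let ψ := (IsFractionRing.ringEquivOfRingEquivHom F⟦X⟧ (LaurentSeries F)).comp ρ
  have hψ : Function.Injective ψ :=
    (IsFractionRing.ringEquivOfRingEquivHom_injective F⟦X⟧ (LaurentSeries F)).comp hρ
  let _ : MulSemiringAction G (LaurentSeries F) := MulSemiringAction.compHom _ ψ
  have : FaithfulSMul G (LaurentSeries F) := ⟨fun {a b} h => hψ (RingEquiv.ext h)⟩
  cases nonempty_fintype G
  refine ⟨FixedPoints.subfield G (LaurentSeries F), inferInstance, inferInstance, ?_⟩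
  rw [FixedPoints.finrank_eq_card, Nat.card_eq_fintype_card]

theorem exists_wild (F : Type*) [Field F] (p : ℕ) [Fact p.Prime] [Algebra (ZMod p) F] (a : ℕ) :
    ∃ K' : Subfield (LaurentSeries F), FiniteDimensional ↥K' (LaurentSeries F) ∧
        IsGalois ↥K' (LaurentSeries F) ∧ Module.finrank ↥K' (LaurentSeries F) = p ^ a := by
  let P : (Fin a → ZMod p) → Polynomial F := fun v =>
    ((Polynomial.degreeLTEquiv (ZMod p) a).symm v : Polynomial (ZMod p)).map (algebraMap _ F)
  obtain ⟨ρ, hρ⟩ := wild_action P (fun v w => by simp [P])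
    (fun v w h => (Polynomial.degreeLTEquiv (ZMod p) a).symm.injective
      (Subtype.ext (Polynomial.map_injective _ (algebraMap (ZMod p) F).injective h)))
    (fun v hv => by
      obtain ⟨w, h1, h2⟩ := Polynomial.exists_eq_pow_rootMultiplicity_mul_and_not_dvd (P v) hv 0
      refine ⟨_, w, by simpa using h1, ?_⟩
      rwa [map_zero, sub_zero, Polynomial.X_dvd_iff] at h2)
  obtain ⟨K', h1, h2, h3⟩ := exists_subfield ρ hρ
  exact ⟨K', h1, h2, by rw [h3]; simp [Nat.card_eq_fintype_card]⟩

/-- coefficientwise action on power series -/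
noncomputable def mapEquiv {F : Type*} [Field F] (σ : F ≃+* F) : F⟦X⟧ ≃+* F⟦X⟧ :=
  RingEquiv.ofRingHom (PowerSeries.map (σ : F →+* F)) (PowerSeries.map (σ.symm : F →+* F))
    (by ext f n; simp) (by ext f n; simp)

/-- rescaling as an automorphism of power series -/
noncomputable def scaleEquiv {F : Type*} [Field F] (c : Fˣ) : F⟦X⟧ ≃+* F⟦X⟧ :=
  RingEquiv.ofRingHom (rescale (c : F)) (rescale ((c⁻¹ : Fˣ) : F))
    (by ext f n; simp [rescale_rescale]) (by ext f n; simp [rescale_rescale])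

theorem coeff_mapEquiv {F : Type*} [Field F] (σ : F ≃+* F) (f : F⟦X⟧) (n : ℕ) :
    coeff n (mapEquiv σ f) = σ (coeff n f) := by
  simp [mapEquiv]

theorem coeff_scaleEquiv {F : Type*} [Field F] (c : Fˣ) (f : F⟦X⟧) (n : ℕ) :
    coeff n (scaleEquiv c f) = (c : F) ^ n * coeff n f := by
  simp [scaleEquiv, coeff_rescale]

theorem exists_tame (F : Type*) [Field F] [Finite F] (p : ℕ) [Fact p.Prime] [Algebra (ZMod p) F] :
    ∃ K' : Subfield (LaurentSeries F), FiniteDimensional ↥K' (LaurentSeries F) ∧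
        IsGalois ↥K' (LaurentSeries F) ∧
        Module.finrank ↥K' (LaurentSeries F) = Nat.card Fˣ * Nat.card (F ≃ₐ[ZMod p] F) := by
  let φ : (F ≃ₐ[ZMod p] F) →* MulAut Fˣ :=
    { toFun := fun σ => Units.mapEquiv (σ : F ≃* F)
      map_one' := by ext; rfl
      map_mul' := fun σ τ => by ext; rfl }
  let fn : Fˣ →* (F⟦X⟧ ≃+* F⟦X⟧) :=
    { toFun := scaleEquiv
      map_one' := by ext f n; simp [coeff_scaleEquiv]
      map_mul' := fun c d => by ext f n; simp [coeff_scaleEquiv, mul_pow, mul_assoc] }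
  let fg : (F ≃ₐ[ZMod p] F) →* (F⟦X⟧ ≃+* F⟦X⟧) :=
    { toFun := fun σ => mapEquiv (σ : F ≃+* F)
      map_one' := by ext f n; simp [coeff_mapEquiv]
      map_mul' := fun c d => by ext f n; simp [coeff_mapEquiv] }
  have hfn : ∀ c, fn c = scaleEquiv c := fun _ => rfl
  have hfg : ∀ σ, fg σ = mapEquiv (σ : F ≃+* F) := fun _ => rfl
  have hφ : ∀ σ c, ((φ σ c : Fˣ) : F) = σ c := fun _ _ => rfl
  have comm : ∀ g, fn.comp (φ g).toMonoidHom = (MulAut.conj (fg g)).toMonoidHom.comp fn := by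
    intro g
    ext1 c
    simp only [MonoidHom.comp_apply, MulEquiv.coe_toMonoidHom, MulAut.conj_apply]
    rw [_root_.eq_mul_inv_iff_mul_eq]
    ext f n
    simp [hfn, hfg, coeff_scaleEquiv, coeff_mapEquiv, hφ]
  have : Finite (F ≃ₐ[ZMod p] F) := inferInstance
  have : Finite (Fˣ ⋊[φ] (F ≃ₐ[ZMod p] F)) := Finite.of_equiv _ SemidirectProduct.equivProd.symm
  have hinj : Function.Injective (SemidirectProduct.lift fn fg comm) := by
    rw [injective_iff_map_eq_one]
    rintro ⟨c, σ⟩ h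
    have h1 : ∀ f, fn c (fg σ f) = f := fun f => DFunLike.congr_fun h f
    have h2 : c = 1 := by
      have := congrArg (coeff 1) (h1 X)
      ext
      simpa [hfn, hfg, coeff_scaleEquiv, coeff_mapEquiv] using this
    have h3 : σ = 1 := by
      ext x
      have := congrArg (coeff 0) (h1 (C x))
      simpa [hfn, hfg, coeff_scaleEquiv, coeff_mapEquiv] using this
    subst h2 h3
    rfl
  obtain ⟨K', a, b, e⟩ := exists_subfield _ hinj
  exact ⟨K', a, b, by rw [e, SemidirectProduct.card]⟩

section forward
variable {F : Type*} [Field F]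

/-- n-th roots of one-units -/
theorem exists_root (p : ℕ) [Fact p.Prime] [CharP F p] (k : ℕ) (f : F⟦X⟧) :
    ∃ g : F⟦X⟧, g ^ (p * k + 1) = 1 + X * f := by
  let I : Ideal F⟦X⟧ := Ideal.span {X}
  have hH : HenselianRing F⟦X⟧ I := inferInstance
  have : CharP F⟦X⟧ p := charP_of_injective_ringHom (C_injective (R := F)) p
  obtain ⟨g, hg, -⟩ := hH.is_henselian
    (Polynomial.X ^ (p * k + 1) - Polynomial.C (1 + X * f))
    (Polynomial.monic_X_pow_sub_C _ (Nat.succ_ne_zero _)) 1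
    (by
      simp only [Polynomial.eval_sub, Polynomial.eval_pow, Polynomial.eval_X, Polynomial.eval_C,
        one_pow]
      rw [Ideal.mem_span_singleton]
      exact ⟨-f, by ring⟩)
    (by
      simp)
  refine ⟨g, ?_⟩
  rw [Polynomial.IsRoot.def] at hg
  simpa [sub_eq_zero] using hg

theorem mem_of_order {x : LaurentSeries F} (h : 0 ≤ x.order) :
    ∃ f : F⟦X⟧, x = HahnSeries.ofPowerSeries ℤ F f := by
  obtain ⟨n, hn⟩ := Int.eq_ofNat_of_zero_le h
  exact ⟨_, (LaurentSeries.X_order_mul_powerSeriesPart hn.symm).symm⟩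

theorem mem_of_pow (p : ℕ) [Fact p.Prime] (x : LaurentSeries F)
    (h : ∀ k : ℕ, ∃ y, y ^ (p * k + 1) = x) : ∃ f : F⟦X⟧, x = HahnSeries.ofPowerSeries ℤ F f := by
  apply mem_of_order
  obtain ⟨y, hy⟩ := h (x.order.natAbs)
  have h1 := congrArg HahnSeries.order hy
  rw [HahnSeries.order_pow, nsmul_eq_mul] at h1
  by_contra hneg
  have hp : 0 < p := (Fact.out : p.Prime).pos
  have hd : (p * x.order.natAbs + 1) ∣ x.order.natAbs := by
    rw [← Int.natCast_dvd]; exact ⟨_, h1.symm⟩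
  have := Nat.le_of_dvd (by omega) hd
  have := Nat.le_mul_of_pos_left x.order.natAbs hp
  omega

theorem tower (p : ℕ) [Fact p.Prime] [Algebra (ZMod p) F] :
    @IsScalarTower (ZMod p) F (LaurentSeries F) Algebra.toSMul Algebra.toSMul Algebra.toSMul :=
  IsScalarTower.of_algebraMap_eq fun x =>
    congrArg (HahnSeries.ofPowerSeries ℤ F) (IsScalarTower.algebraMap_apply (ZMod p) F F⟦X⟧ x)

theorem algebraMap_const (c : F) :
    algebraMap F (LaurentSeries F) c = HahnSeries.ofPowerSeries ℤ F (C c) := rfl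

attribute [local instance] tower

variable (p : ℕ) [Fact p.Prime] [CharP F p] [Finite F] [Algebra (ZMod p) F]

local notation "ι" => HahnSeries.ofPowerSeries ℤ F

theorem exists_restrict (σ : LaurentSeries F ≃ₐ[ZMod p] LaurentSeries F) (f : F⟦X⟧) :
    ∃ g : F⟦X⟧, σ (ι f) = ι g := by
  obtain ⟨f', c, rfl⟩ : ∃ f' c, f = X * f' + C c :=
    ⟨_, _, PowerSeries.eq_X_mul_shift_add_const f⟩
  obtain ⟨g, hg⟩ := mem_of_pow p (σ (ι (1 + X * f'))) (fun k => by
    obtain ⟨g, hg⟩ := exists_root p k f'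
    exact ⟨σ (ι g), by rw [← map_pow, ← map_pow, hg]⟩)
  refine ⟨g - 1 + C (AlgEquiv.restrictNormalHom F σ c), ?_⟩
  have h : ι (C (AlgEquiv.restrictNormalHom F σ c)) = σ (ι (C c)) := by
    have := AlgEquiv.restrictNormal_commutes σ F c
    rw [algebraMap_const, algebraMap_const] at this
    exact this
  rw [map_add ι (g - 1), map_sub ι, map_one ι, h, ← hg]
  simp only [map_add, map_one]
  ring

theorem forward {G : Type*} [Group G] [Finite G]
    (ρ : G →* (LaurentSeries F ≃ₐ[ZMod p] LaurentSeries F)) (hρ : Function.Injective ρ)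
    (hG : (Nat.card G).Coprime p) :
    Nat.card G ∣ Nat.card (F ≃ₐ[ZMod p] F) * Nat.card Fˣ := by
  choose r hr using exists_restrict (F := F) p
  have hι : Function.Injective ι := HahnSeries.ofPowerSeries_injective
  have radd : ∀ σ f g, r σ (f + g) = r σ f + r σ g := fun σ f g => hι (by
    rw [← hr, map_add, map_add, map_add, hr, hr])
  have rmul : ∀ σ f g, r σ (f * g) = r σ f * r σ g := fun σ f g => hι (by
    rw [← hr, map_mul, map_mul, map_mul, hr, hr])
  have rone : ∀ σ, r σ 1 = 1 := fun σ => hι (by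
    rw [← hr, map_one, map_one])
  have rpow : ∀ σ f (n : ℕ), r σ (f ^ n) = r σ f ^ n := fun σ f n => hι (by
    rw [← hr, map_pow, map_pow, map_pow, hr])
  have rone' : ∀ f, r 1 f = f := fun f => hι (by rw [← hr]; rfl)
  have rcomp : ∀ σ τ f, r (σ * τ) f = r σ (r τ f) := fun σ τ f => hι (by
    rw [← hr, ← hr, ← hr]; rfl)
  have rX : ∀ σ, X ∣ r σ X := by
    intro σ
    rw [X_dvd_iff]
    by_contra h
    have hu : IsUnit (r σ X) := by
      rw [PowerSeries.isUnit_iff_constantCoeff]; exact isUnit_iff_ne_zero.2 h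
    obtain ⟨g, hg⟩ := hu.exists_right_inv
    have h2 := congrArg (r σ⁻¹) hg
    rw [rmul, ← rcomp, inv_mul_cancel, rone', rone] at h2
    have := congrArg constantCoeff h2
    simp at this
  let φ := (AlgEquiv.restrictNormalHom (F := ZMod p) (K₁ := LaurentSeries F) F).comp ρ
  have rC : ∀ g : φ.ker, ∀ c : F, r (ρ g) (C c) = C c := by
    intro g c
    have h1 : AlgEquiv.restrictNormalHom F (ρ g) = 1 := g.2
    have := AlgEquiv.restrictNormal_commutes (ρ g) F c
    rw [algebraMap_const, algebraMap_const] at this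
    apply hι
    rw [← hr]
    refine Eq.trans this.symm ?_
    change ι (C (AlgEquiv.restrictNormalHom F (ρ g) c)) = _
    rw [h1]; rfl
  have rdiff : ∀ g : φ.ker, ∀ f, X ∣ r (ρ g) f - f := by
    intro g f
    obtain ⟨f', c, rfl⟩ : ∃ f' c, f = X * f' + C c :=
      ⟨_, _, PowerSeries.eq_X_mul_shift_add_const f⟩
    obtain ⟨A, hA⟩ := rX (ρ g)
    rw [radd, rmul, rC, hA]
    exact ⟨A * r (ρ g) f' - f', by ring⟩
  let χ₀ : φ.ker →* F :=
    { toFun := fun g => coeff 1 (r (ρ g) X)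
      map_one' := by simp [rone']
      map_mul' := fun g h => by
        obtain ⟨A, hA⟩ := rX (ρ g)
        obtain ⟨B, hB⟩ := rX (ρ h)
        obtain ⟨D, hD⟩ := rdiff g B
        rw [sub_eq_iff_eq_add] at hD
        have e : r (ρ (g * h : φ.ker)) X = X * (A * (X * D + B)) := by
          rw [Subgroup.coe_mul, map_mul, rcomp, hB, rmul, hA, hD]; ring
        rw [e, hA, hB]
        have key : ∀ Y : F⟦X⟧, coeff 1 (X * Y) = constantCoeff Y := fun Y => by
          rw [show (1:ℕ) = 0 + 1 from rfl, coeff_succ_X_mul, coeff_zero_eq_constantCoeff]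
        simp [key] }
  have hχ : Function.Injective χ₀.toHomUnits := by
    rw [injective_iff_map_eq_one]
    intro g hg
    have hg1 : coeff 1 (r (ρ g) X) = 1 := congrArg Units.val hg
    obtain ⟨B, hB⟩ : ∃ B, r (ρ g) X = X * (1 + X * B) := by
      obtain ⟨A, hA⟩ := rX (ρ g)
      rw [hA, show (1:ℕ) = 0 + 1 from rfl, coeff_succ_X_mul, coeff_zero_eq_constantCoeff] at hg1
      obtain ⟨B, hB⟩ : X ∣ A - 1 := by rw [X_dvd_iff]; simp [hg1]
      exact ⟨B, by rw [hA, ← hB]; ring⟩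
    have raise : ∀ k f, X ^ k ∣ f → X ^ (k + 1) ∣ r (ρ g) f - f := by
      rintro k _ ⟨h, rfl⟩
      obtain ⟨D, hD⟩ := rdiff g h
      have h1 : X ∣ (1 + X * B) ^ k - 1 := by
        have := sub_dvd_pow_sub_pow (1 + X * B) 1 k
        rw [one_pow] at this
        exact (Dvd.intro B (by ring)).trans this
      obtain ⟨E, hE⟩ := h1
      refine ⟨E * r (ρ g) h + D, ?_⟩
      rw [rmul, rpow, hB, mul_pow]
      linear_combination X ^ k * r (ρ g) h * hE + X ^ k * hD
    have iter : ∀ k f, X ^ k ∣ r (ρ g) f - f → ∀ j : ℕ,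
        X ^ (k + 1) ∣ r (ρ g ^ j) f - f - (j : F⟦X⟧) * (r (ρ g) f - f) := by
      intro k f hk j
      induction j with
      | zero => simp [rone']
      | succ j ih =>
        obtain ⟨E, hE⟩ := ih
        obtain ⟨E', hE'⟩ := raise k (r (ρ g ^ j) f - f) (by
          have : r (ρ g ^ j) f - f = X ^ (k+1) * E + (j : F⟦X⟧) * (r (ρ g) f - f) := by
            rw [← hE]; ring
          rw [this]
          exact dvd_add ((pow_dvd_pow X (Nat.le_succ k)).trans (dvd_mul_right _ _))
            (hk.mul_left _))
        have e1 := radd (ρ g) (r (ρ g ^ j) f - f) f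
        rw [sub_add_cancel] at e1
        refine ⟨E + E', ?_⟩
        rw [pow_succ', rcomp, e1]
        push_cast
        linear_combination hE + hE'
    have hn : ((Nat.card G : ℕ) : F) ≠ 0 := by
      rw [Ne, CharP.cast_eq_zero_iff F p]
      intro h
      have := Nat.Coprime.eq_one_of_dvd hG.symm h
      exact (Fact.out : p.Prime).one_lt.ne' this
    have hun : IsUnit ((Nat.card G : ℕ) : F⟦X⟧) := by
      rw [PowerSeries.isUnit_iff_constantCoeff, map_natCast]; exact isUnit_iff_ne_zero.2 hn
    have hfix : ∀ f, r (ρ g) f = f := by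
      intro f
      have hd : ∀ k, X ^ k ∣ r (ρ g) f - f := by
        intro k
        induction k with
        | zero => simp
        | succ k ih =>
          have := iter k f ih (Nat.card G)
          have e : ρ g ^ Nat.card G = 1 := by rw [← map_pow, pow_card_eq_one', map_one]
          rw [e, rone', sub_self, zero_sub, dvd_neg] at this
          exact (hun.dvd_mul_left).1 this
      rw [← sub_eq_zero]
      ext n
      simpa using (X_pow_dvd_iff.1 (hd (n+1))) n (Nat.lt_succ_self n)
    apply Subtype.ext
    apply hρ
    rw [Subgroup.coe_one, map_one]
    ext1 x
    obtain ⟨a, b, hb, rfl⟩ := IsFractionRing.div_surjective (A := F⟦X⟧) x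
    have hal : ∀ f : F⟦X⟧, ρ g (algebraMap F⟦X⟧ (LaurentSeries F) f) = algebraMap _ _ f := by
      intro f
      rw [LaurentSeries.coe_algebraMap, hr, hfix]
    rw [map_div₀, hal, hal]
    rfl
  have d1 : Nat.card φ.ker ∣ Nat.card Fˣ := Subgroup.card_dvd_of_injective _ hχ
  have d2 : φ.ker.index ∣ Nat.card (F ≃ₐ[ZMod p] F) := by
    rw [Subgroup.index_ker]; exact Subgroup.card_subgroup_dvd_card _
  rw [← Subgroup.card_mul_index φ.ker, mul_comm]
  exact mul_dvd_mul d2 d1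

end forward

end GSL

theorem galois_subfield_degree_laurent (p : ℕ) [Fact p.Prime] (i : ℕ) (hi : 0 < i)
    (q : ℕ) (hq : q.Prime) (a : ℕ) :
    (∃ K' : Subfield (LaurentSeries (GaloisField p i)),
        FiniteDimensional ↥K' (LaurentSeries (GaloisField p i)) ∧
        IsGalois ↥K' (LaurentSeries (GaloisField p i)) ∧
        q ^ a ∣ Module.finrank ↥K' (LaurentSeries (GaloisField p i)))
      ↔ (q = p ∨ q ^ a ∣ i * (p ^ i - 1)) := by
  have hu : Nat.card (GaloisField p i)ˣ = p ^ i - 1 := by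
    rw [Nat.card_units, GaloisField.card p i hi.ne']
  have hg : Nat.card (GaloisField p i ≃ₐ[ZMod p] GaloisField p i) = i := by
    rw [IsGalois.card_aut_eq_finrank, GaloisField.finrank p hi.ne']
  constructor
  · rintro ⟨K', h1, h2, h3⟩
    by_cases hqp : q = p
    · exact Or.inl hqp
    right
    rw [← IsGalois.card_aut_eq_finrank] at h3
    have : Fact q.Prime := ⟨hq⟩
    obtain ⟨H, hH⟩ := Sylow.exists_subgroup_card_pow_prime q h3
    let ρ₀ : (LaurentSeries (GaloisField p i) ≃ₐ[K'] LaurentSeries (GaloisField p i)) →*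
        (LaurentSeries (GaloisField p i) ≃ₐ[ZMod p] LaurentSeries (GaloisField p i)) :=
      { toFun := fun σ => AlgEquiv.ofRingEquiv (f := RingEquivClass.toRingEquiv σ) (fun x => by
          have := Subsingleton.elim
            ((RingEquivClass.toRingEquiv σ).toRingHom.comp
              (algebraMap (ZMod p) (LaurentSeries (GaloisField p i))))
            (algebraMap (ZMod p) (LaurentSeries (GaloisField p i)))
          exact RingHom.congr_fun this x)
        map_one' := rfl
        map_mul' := fun _ _ => rfl }
    have hinj : Function.Injective (ρ₀.comp H.subtype) := by
      intro x y h
      apply Subtype.ext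
      ext1 z
      exact DFunLike.congr_fun h z
    have := GSL.forward p (ρ₀.comp H.subtype) hinj (by
      rw [hH]
      exact Nat.Coprime.pow_left _ ((Nat.coprime_primes hq Fact.out).2 hqp))
    rwa [hH, hg, hu] at this
  · rintro (rfl | h)
    · obtain ⟨K', h1, h2, h3⟩ := GSL.exists_wild (GaloisField q i) q a
      exact ⟨K', h1, h2, h3 ▸ dvd_rfl⟩
    · obtain ⟨K', h1, h2, h3⟩ := GSL.exists_tame (GaloisField p i) p
      refine ⟨K', h1, h2, ?_⟩
      rw [h3, hu, hg, mul_comm]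
      exact h
end

section
/- Let K = F_{p^i}((T)), D a central division algebra of degree d over K, n ≥ 1. If gcd(nd, [K:K']) divides n for every subfield K' ≤ K with K/K' finite Galois, then gcd(d, p) = 1 and gcd(nd, i(p^i − 1)) divides n. Conversely these two conditions imply the divisibility condition for all such K'. -/
namespace LaurentAux

open PowerSeries

/-- a finite group of automorphisms gives a Galois subfield -/
theorem exists_subfield_of_group {K : Type*} [Field K] {G : Type*} [Group G] [Finite G]
    (ρ : G →* RingAut K) (hρ : Function.Injective ρ) :
    ∃ K' : Subfield K, FiniteDimensional ↥K' K ∧ IsGalois ↥K' K ∧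
      Module.finrank ↥K' K = Nat.card G := by
  classical
  let H := ρ.range
  have : Finite H := Finite.of_surjective _ ρ.rangeRestrict_surjective
  have := Fintype.ofFinite H
  refine ⟨FixedPoints.subfield H K, inferInstance, ?_, ?_⟩
  · exact { }
  · rw [FixedPoints.finrank_eq_card H K, ← Nat.card_eq_fintype_card]
    exact (Nat.card_congr (MonoidHom.ofInjective hρ).toEquiv).symm

theorem aut_ext_of_coe {A K : Type*} [CommRing A] [IsDomain A] [Field K] [Algebra A K]
    [IsFractionRing A K] {σ τ : RingAut K}
    (h : ∀ x : A, σ (algebraMap A K x) = τ (algebraMap A K x)) : σ = τ := by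
  apply RingEquiv.toRingHom_injective
  apply IsFractionRing.injective_comp_algebraMap (A := A)
  ext x : 1
  exact h x

/-- extension of automorphisms to the fraction field -/
noncomputable def liftAut (A K : Type*) [CommRing A] [IsDomain A] [Field K] [Algebra A K]
    [IsFractionRing A K] : RingAut A →* RingAut K where
  toFun σ := IsFractionRing.ringEquivOfRingEquiv σ
  map_one' := by
    apply aut_ext_of_coe (A := A)
    intro x
    exact IsFractionRing.ringEquivOfRingEquiv_algebraMap _ _
  map_mul' σ τ := by
    apply aut_ext_of_coe (A := A)
    intro x
    rw [RingAut.mul_apply]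
    rw [IsFractionRing.ringEquivOfRingEquiv_algebraMap]
    rw [IsFractionRing.ringEquivOfRingEquiv_algebraMap]
    rw [IsFractionRing.ringEquivOfRingEquiv_algebraMap]
    rfl

theorem liftAut_injective (A K : Type*) [CommRing A] [IsDomain A] [Field K] [Algebra A K]
    [IsFractionRing A K] : Function.Injective (liftAut A K) := by
  intro σ τ h
  ext1 x
  apply IsFractionRing.injective A K
  have h1 : ∀ σ : RingAut A, liftAut A K σ (algebraMap A K x) = algebraMap A K (σ x) :=
    fun σ => IsFractionRing.ringEquivOfRingEquiv_algebraMap _ _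
  rw [← h1, ← h1, h]

theorem card_ringAut (p : ℕ) [Fact p.Prime] (i : ℕ) (hi : 0 < i) :
    Nat.card (RingAut (GaloisField p i)) = i := by
  have e : RingAut (GaloisField p i) ≃ (GaloisField p i ≃ₐ[ZMod p] GaloisField p i) :=
    { toFun := fun σ => AlgEquiv.ofRingEquiv (f := σ) (fun x => by
        have : (σ : GaloisField p i →+* GaloisField p i).comp (algebraMap (ZMod p) _) =
          algebraMap (ZMod p) _ := Subsingleton.elim _ _
        exact congrArg (fun f => f x) this)
      invFun := fun σ => σ.toRingEquiv
      left_inv := fun σ => by ext; rfl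
      right_inv := fun σ => by ext; rfl }
  rw [Nat.card_congr e, IsGalois.card_aut_eq_finrank, GaloisField.finrank p hi.ne']

/-- The rescaling automorphisms. -/
noncomputable def rescaleAut (F : Type*) [Field F] : Fˣ →* RingAut F⟦X⟧ where
  toFun a := RingEquiv.ofRingHom (rescale (a : F)) (rescale ((a⁻¹ : Fˣ) : F))
    (by rw [← rescale_mul]; simp) (by rw [← rescale_mul]; simp)
  map_one' := by
    ext1 f
    change rescale ((1 : Fˣ) : F) f = f
    simp
  map_mul' a b := by
    ext1 f
    change rescale ((a * b : Fˣ) : F) f = rescale (a : F) (rescale (b : F) f)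
    rw [rescale_rescale, mul_comm]; simp

/-- The coefficientwise automorphisms. -/
noncomputable def mapAut (F : Type*) [Field F] : RingAut F →* RingAut F⟦X⟧ where
  toFun τ := RingEquiv.ofRingHom (PowerSeries.map (τ : F →+* F))
    (PowerSeries.map (τ.symm : F →+* F))
    (by ext; simp) (by ext; simp)
  map_one' := by ext; rfl
  map_mul' a b := by ext; rfl

theorem coeff_mapAut {F : Type*} [Field F] (τ : RingAut F) (f : F⟦X⟧) (n : ℕ) :
    coeff n (mapAut F τ f) = τ (coeff n f) := rfl

theorem coeff_rescaleAut {F : Type*} [Field F] (a : Fˣ) (f : F⟦X⟧) (n : ℕ) :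
    coeff n (rescaleAut F a f) = a ^ n * (coeff n f) := coeff_rescale _ _ _

/-- The action of field automorphisms on units. -/
def unitAct (F : Type*) [Field F] : RingAut F →* MulAut Fˣ where
  toFun τ := Units.mapEquiv (τ : F ≃* F)
  map_one' := by ext; rfl
  map_mul' a b := by ext; rfl

/-- The tame group -/
noncomputable def tameHom (F : Type*) [Field F] :
    Fˣ ⋊[unitAct F] RingAut F →* RingAut F⟦X⟧ :=
  SemidirectProduct.lift (rescaleAut F) (mapAut F) (by
    intro g
    ext a f n
    change coeff n (rescaleAut F (unitAct F g a) f) =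
      coeff n (mapAut F g (rescaleAut F a ((mapAut F g)⁻¹ f)))
    rw [coeff_mapAut, coeff_rescaleAut, coeff_rescaleAut, map_mul, ← coeff_mapAut, map_pow]
    congr 2
    exact (RingEquiv.apply_symm_apply (mapAut F g) f).symm)

theorem tameHom_injective (F : Type*) [Field F] : Function.Injective (tameHom F) := by
  rw [injective_iff_map_eq_one]
  rintro ⟨a, τ⟩ h
  have key : ∀ f n, coeff n (rescaleAut F a (mapAut F τ f)) = coeff n f := by
    intro f n
    have : rescaleAut F a * mapAut F τ = 1 := h
    rw [← RingAut.mul_apply, this]; rfl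
  have ha : a = 1 := by
    have := key X 1
    rw [coeff_rescaleAut, coeff_mapAut, coeff_one_X] at this
    ext; simpa using this
  have hτ : τ = 1 := by
    ext x
    have := key (C x) 0
    rw [coeff_rescaleAut, coeff_mapAut] at this
    simpa using this
  subst ha hτ
  rfl

theorem exists_tame (p : ℕ) [Fact p.Prime] (i : ℕ) (hi : 0 < i) :
    ∃ K' : Subfield (LaurentSeries (GaloisField p i)),
      FiniteDimensional ↥K' (LaurentSeries (GaloisField p i)) ∧
      IsGalois ↥K' (LaurentSeries (GaloisField p i)) ∧
      Module.finrank ↥K' (LaurentSeries (GaloisField p i)) = i * (p ^ i - 1) := by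
  classical
  have hc := card_ringAut p i hi
  have : Finite (RingAut (GaloisField p i)) := Nat.finite_of_card_ne_zero (by omega)
  have : Finite ((GaloisField p i)ˣ ⋊[unitAct (GaloisField p i)] RingAut (GaloisField p i)) :=
    Finite.of_equiv _ SemidirectProduct.equivProd.symm
  obtain ⟨K', h1, h2, h3⟩ := exists_subfield_of_group
    ((liftAut (GaloisField p i)⟦X⟧ (LaurentSeries (GaloisField p i))).comp (tameHom (GaloisField p i)))
    ((liftAut_injective _ _).comp (tameHom_injective _))
  refine ⟨K', h1, h2, ?_⟩
  rw [h3, SemidirectProduct.card, hc, Nat.card_units, GaloisField.card p i hi.ne', mul_comm]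

theorem eq_zero_of_X_pow_dvd {F : Type*} [Field F] {f : F⟦X⟧} (h : ∀ n : ℕ, X ^ n ∣ f) :
    f = 0 := by
  ext n
  exact X_pow_dvd_iff.mp (h (n + 1)) n (by omega)

/-- contraction on the maximal ideal: fixed points are unique -/
theorem contraction_unique {F : Type*} [Field F] (Θ : F⟦X⟧ → F⟦X⟧)
    (hΘ : ∀ x y, X ∣ x → X ∣ y → (x - y) * X ∣ Θ x - Θ y) {x y : F⟦X⟧} (hx : X ∣ x) (hy : X ∣ y)
    (h1 : Θ x = x) (h2 : Θ y = y) : x = y := by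
  have h := hΘ x y hx hy
  rw [h1, h2] at h
  obtain ⟨c, hc⟩ := h
  have h3 : (x - y) * (1 - X * c) = 0 := by linear_combination hc
  rcases mul_eq_zero.mp h3 with h4 | h4
  · exact sub_eq_zero.mp h4
  · exfalso
    have := congrArg constantCoeff h4
    simp at this

theorem contraction_exists {F : Type*} [Field F] (Θ : F⟦X⟧ → F⟦X⟧)
    (hΘ : ∀ x y, X ∣ x → X ∣ y → (x - y) * X ∣ Θ x - Θ y) (h0 : ∀ x, X ∣ x → X ∣ Θ x) :
    ∃ x, X ∣ x ∧ Θ x = x := by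
  have hX : ∀ n, X ∣ Θ^[n] 0 := by
    intro n
    induction n with
    | zero => simp
    | succ n ih => rw [Function.iterate_succ_apply']; exact h0 _ ih
  have hs : ∀ n, X ^ (n + 1) ∣ Θ^[n + 1] 0 - Θ^[n] 0 := by
    intro n
    induction n with
    | zero => simpa using h0 0 (by simp)
    | succ n ih =>
      rw [Function.iterate_succ_apply', Function.iterate_succ_apply' Θ n]
      refine dvd_trans ?_ (hΘ _ _ (h0 _ (hX n)) (hX n))
      rw [pow_succ]
      rw [← Function.iterate_succ_apply' Θ n]
      exact mul_dvd_mul_right ih _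
  have hs2 : ∀ n k, X ^ (n + 1) ∣ Θ^[n + k] 0 - Θ^[n] 0 := by
    intro n k
    induction k with
    | zero => simp
    | succ k ih =>
      have := dvd_add ((pow_dvd_pow X (by omega)).trans (hs (n + k))) ih
      simpa [add_assoc] using this
  let y : F⟦X⟧ := PowerSeries.mk fun n => coeff n (Θ^[n] 0)
  have hy : ∀ n, X ^ (n + 1) ∣ y - Θ^[n] 0 := by
    intro n
    rw [X_pow_dvd_iff]
    intro m hm
    obtain ⟨k, rfl⟩ := Nat.exists_eq_add_of_le (Nat.lt_succ_iff.mp hm)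
    have := X_pow_dvd_iff.mp (hs2 m k) m (by omega)
    rw [map_sub, sub_eq_zero] at this
    simp [y, this]
  have hyX : X ∣ y := by
    have := hy 0
    simpa using this
  refine ⟨y, hyX, ?_⟩
  rw [← sub_eq_zero]
  apply eq_zero_of_X_pow_dvd
  intro n
  have a1 := (Dvd.intro _ rfl).trans (hΘ _ _ hyX (hX n))
  have a2 : X ^ n ∣ Θ y - Θ^[n + 1] 0 := by
    rw [Function.iterate_succ_apply']
    exact (pow_dvd_pow X (by omega)).trans ((hy n).trans a1)
  have a3 : X ^ n ∣ y - Θ^[n + 1] 0 := (pow_dvd_pow X (by omega)).trans (hy (n + 1))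
  simpa using dvd_sub a2 a3

/-- an endomorphism fixing constants and a uniformizer is trivial -/
theorem endo_eq_id {F : Type*} [Field F] (τ : F⟦X⟧ →+* F⟦X⟧) (hC : ∀ c, τ (C c) = C c)
    (u : F⟦X⟧) (hu0 : constantCoeff u = 0) (hu1 : coeff 1 u ≠ 0) (hu : τ u = u) (f : F⟦X⟧) :
    τ f = f := by
  obtain ⟨v, rfl⟩ := X_dvd_iff.mpr hu0
  have hv : IsUnit v := by
    rw [PowerSeries.isUnit_iff_constantCoeff]
    rw [show 1 = 0 + 1 from rfl, coeff_succ_X_mul] at hu1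
    simpa using hu1
  obtain ⟨w, hw⟩ := hv.exists_right_inv
  rw [← sub_eq_zero]
  apply eq_zero_of_X_pow_dvd
  intro n
  induction n generalizing f with
  | zero => simp
  | succ n ih =>
    have hf : X ∣ f - C (constantCoeff f) := by
      rw [X_dvd_iff]; simp
    obtain ⟨g, hg⟩ := hf
    have hf2 : f = C (constantCoeff f) + (X * v) * (w * g) := by
      linear_combination hg - X * g * hw
    have : τ f - f = X * v * (τ (w * g) - w * g) := by
      conv_lhs => rw [hf2]
      rw [map_add, map_mul τ (X * v), hu, hC]
      ring
    rw [this, pow_succ', mul_assoc]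
    exact mul_dvd_mul_left _ (dvd_mul_of_dvd_right (ih _) _)

theorem end_mul_apply {A : Type*} [AddCommGroup A] (f g : AddMonoid.End A) (x : A) :
    (f * g) x = f (g x) := rfl

/-- The Carlitz-type operator -/
noncomputable def phi {A : Type*} [CommRing A] (p : ℕ) [ExpChar A p] (x : A) : AddMonoid.End A :=
  AddMonoidHom.mulLeft x + (frobenius A p).toAddMonoidHom

theorem phi_apply {A : Type*} [CommRing A] (p : ℕ) [ExpChar A p] (x z : A) :
    phi p x z = x * z + z ^ p := rfl

theorem phi_pow_dvd {F : Type*} [Field F] (p : ℕ) [Fact p.Prime] [ExpChar F⟦X⟧ p]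
    {x t : F⟦X⟧} (ht : X ∣ t) (j : ℕ) : X ∣ ((phi p x) ^ j) t := by
  induction j with
  | zero => simpa using ht
  | succ j ih =>
    rw [pow_succ', end_mul_apply, phi_apply]
    exact dvd_add (dvd_mul_of_dvd_right ih _)
      (dvd_pow ih (Fact.out : p.Prime).ne_zero)

theorem phi_pow_sub_dvd {F : Type*} [Field F] (p : ℕ) [Fact p.Prime] [ExpChar F⟦X⟧ p]
    {x y t : F⟦X⟧} (ht : X ∣ t) (j : ℕ) :
    (x - y) * X ∣ ((phi p x) ^ j) t - ((phi p y) ^ j) t := by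
  induction j with
  | zero => simp
  | succ j ih =>
    simp only [pow_succ', end_mul_apply, phi_apply]
    have h1 := phi_pow_dvd p (x := x) ht j
    set a := ((phi p x) ^ j) t
    set b := ((phi p y) ^ j) t
    have : x * a + a ^ p - (y * b + b ^ p) = (x - y) * a + y * (a - b) + (a - b) ^ p := by
      rw [sub_pow_expChar]; ring
    rw [this]
    exact dvd_add (dvd_add (mul_dvd_mul_left _ h1) (dvd_mul_of_dvd_right ih _))
      (dvd_pow ih (Fact.out : p.Prime).ne_zero)

theorem exists_wild_aut {F : Type*} [Field F] (p : ℕ) [Fact p.Prime] [CharP F p] (s : ℕ) :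
    ∃ σ : RingAut F⟦X⟧, orderOf σ = p ^ (s + 1) := by
  have hp : p.Prime := Fact.out
  have hch : CharP F⟦X⟧ p :=
    charP_of_injective_ringHom (f := (C : F →+* F⟦X⟧)) PowerSeries.C_injective p
  have hexp : ExpChar F⟦X⟧ p := ExpChar.prime hp
  set k := p ^ s with hk
  have hp1 : p - 1 ≠ 0 := by have := hp.two_le; omega
  let Θ : F⟦X⟧ → F⟦X⟧ → F⟦X⟧ := fun t x => - ((phi p x ^ k) t) ^ (p - 1)
  have hΘ0 : ∀ t x, X ∣ t → X ∣ Θ t x := fun t x ht =>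
    (dvd_neg.mpr (dvd_pow (phi_pow_dvd p ht k) hp1))
  have hΘ : ∀ t, X ∣ t → ∀ x y, X ∣ x → X ∣ y → (x - y) * X ∣ Θ t x - Θ t y := by
    intro t ht x y _ _
    have h1 := phi_pow_sub_dvd p (x := y) (y := x) ht k
    have h2 := h1.trans (sub_dvd_pow_sub_pow _ _ (p - 1))
    have h3 : Θ t x - Θ t y = ((phi p y ^ k) t) ^ (p - 1) - ((phi p x ^ k) t) ^ (p - 1) := by
      simp only [Θ]; ring
    rw [h3]
    refine dvd_trans ?_ h2
    exact ⟨-1, by ring⟩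
  obtain ⟨x, hxX, hx⟩ := contraction_exists (Θ X) (hΘ X dvd_rfl) (fun x _ => hΘ0 X x dvd_rfl)
  have hx' : x + ((phi p x ^ k) X) ^ (p - 1) = 0 := by
    have : - ((phi p x ^ k) X) ^ (p - 1) = x := hx
    linear_combination -this
  have hkill : (phi p x ^ (k + 1)) X = 0 := by
    rw [pow_succ', end_mul_apply, phi_apply]
    have : ((phi p x ^ k) X) ^ p = ((phi p x ^ k) X) ^ (p - 1) * ((phi p x ^ k) X) := by
      rw [← pow_succ]; congr 1; have := hp.two_le; omega
    rw [this]
    linear_combination ((phi p x ^ k) X) * hx'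
  have hne : (phi p x ^ k) X ≠ 0 := by
    intro h
    rw [h, zero_pow hp1, add_zero] at hx'
    have : ∀ j, (phi p x ^ j) X = X ^ (p ^ j) := by
      intro j
      induction j with
      | zero => simp
      | succ j ih =>
        rw [pow_succ', end_mul_apply, phi_apply, ih, hx', zero_mul, zero_add, ← pow_mul,
          pow_succ]
    rw [this] at h
    exact pow_ne_zero _ X_ne_zero h
  set T := X + phi p x X with hT
  have hTX : X ∣ T := dvd_add dvd_rfl (by simpa using phi_pow_dvd p (x := x) dvd_rfl 1)
  have hTs : HasSubst T := HasSubst.of_constantCoeff_zero' (X_dvd_iff.mp hTX)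
  let σ : F⟦X⟧ →ₐ[F] F⟦X⟧ := substAlgHom hTs
  have hσX : σ X = T := substAlgHom_X hTs
  have hσC : ∀ c, σ (C c) = C c := fun c => σ.commutes c
  have hσdvd : ∀ z, X ∣ z → X ∣ σ z := by
    rintro z ⟨w, rfl⟩
    rw [map_mul, hσX]
    exact dvd_mul_of_dvd_left hTX _
  have hσphi : ∀ (y z : F⟦X⟧) (j : ℕ), σ ((phi p y ^ j) z) = (phi p (σ y) ^ j) (σ z) := by
    intro y z j
    induction j with
    | zero => simp
    | succ j ih =>
      simp only [pow_succ', end_mul_apply, phi_apply, map_add, map_mul, map_pow, ih]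
  have hσx : σ x = x := by
    refine contraction_unique (Θ T) (hΘ T hTX) (hσdvd x hxX) hxX ?_ ?_
    · have := congrArg σ hx'
      rw [map_add, map_pow, hσphi, hσX, map_zero] at this
      change - ((phi p (σ x) ^ k) T) ^ (p - 1) = σ x
      linear_combination -this
    · change - ((phi p x ^ k) T) ^ (p - 1) = x
      have : (phi p x ^ k) T = (phi p x ^ k) X := by
        rw [hT, map_add, ← end_mul_apply, ← pow_succ, hkill, add_zero]
      rw [this]
      exact hx
  have hiter : ∀ j : ℕ, (σ ^ j) X = ((1 + phi p x) ^ j) X := by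
    intro j
    induction j with
    | zero => simp
    | succ j ih =>
      have hxj : (σ ^ j) x = x := by
        clear ih
        induction j with
        | zero => simp
        | succ j ih => rw [pow_succ, AlgHom.mul_apply, hσx, ih]
      rw [pow_succ, AlgHom.mul_apply, hσX, hT, map_add, pow_succ', end_mul_apply, ← ih]
      rw [phi_apply, map_add, map_mul, map_pow, hxj]
      rfl
  have hcharEnd : ∀ m : ℕ, ∀ z, ((1 + phi p x) ^ (p ^ m)) z = z + (phi p x ^ (p ^ m)) z := by
    have : CharP (AddMonoid.End F⟦X⟧) p := by
      refine charP_of_injective_ringHom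
        (f := Module.toAddMonoidEnd F⟦X⟧ F⟦X⟧) ?_ p
      intro a b h
      have h1 : a • (1 : F⟦X⟧) = b • 1 := congrArg (fun e : AddMonoid.End F⟦X⟧ => e 1) h
      simpa using h1
    intro m z
    have := add_pow_char_pow_of_commute p m (Commute.one_left (phi p x))
    rw [this, one_pow]
    rfl
  have hone : σ ^ (p ^ (s + 1)) = 1 := by
    apply AlgHom.ext
    intro f
    refine endo_eq_id (σ ^ (p ^ (s + 1)) : F⟦X⟧ →ₐ[F] F⟦X⟧).toRingHom
      (fun c => (σ ^ (p ^ (s + 1))).commutes c) X (by simp) (by simp) ?_ f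
    change (σ ^ (p ^ (s + 1))) X = X
    rw [hiter, hcharEnd]
    have : p ^ (s + 1) = (p ^ (s + 1) - (k + 1)) + (k + 1) := by
      have := Nat.pow_lt_pow_right hp.one_lt (show s < s + 1 by omega)
      omega
    rw [this, pow_add, end_mul_apply, hkill, map_zero, add_zero]
  have hnone : σ ^ (p ^ s) ≠ 1 := by
    intro h
    have h1 := hiter (p ^ s)
    rw [hcharEnd, h] at h1
    apply hne
    simpa using h1
  let u : (F⟦X⟧ →ₐ[F] F⟦X⟧)ˣ := Units.ofPowEqOne σ _ hone (pow_ne_zero _ hp.ne_zero)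
  have hu : orderOf u = p ^ (s + 1) := by
    apply orderOf_eq_prime_pow
    · intro h
      apply hnone
      simpa [u] using congrArg Units.val h
    · ext1
      simp [u]
  let g : (F⟦X⟧ →ₐ[F] F⟦X⟧)ˣ →* RingAut F⟦X⟧ :=
    { toFun := fun v => (AlgEquiv.algHomUnitsEquiv F F⟦X⟧ v).toRingEquiv
      map_one' := by ext; rfl
      map_mul' := fun a b => by ext; rfl }
  have hg : Function.Injective g := by
    intro a b h
    ext1
    apply AlgHom.ext
    intro f
    exact congrArg (fun e : RingAut F⟦X⟧ => e f) h
  exact ⟨g u, by rw [orderOf_injective g hg, hu]⟩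

theorem X_dvd_aut {F : Type*} [Field F] (σ : RingAut F⟦X⟧) {f : F⟦X⟧} (hf : X ∣ f) : X ∣ σ f := by
  rw [X_dvd_iff] at hf ⊢
  by_contra h
  have h1 : IsUnit (σ f) := by
    rw [PowerSeries.isUnit_iff_constantCoeff]; exact isUnit_iff_ne_zero.mpr h
  have h2 : IsUnit f := (MulEquiv.isUnit_map σ).mp h1
  rw [PowerSeries.isUnit_iff_constantCoeff, hf] at h2
  exact not_isUnit_zero h2

theorem constantCoeff_aut {F : Type*} [Field F] (σ : RingAut F⟦X⟧) (f : F⟦X⟧) :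
    constantCoeff (σ (C (constantCoeff f))) = constantCoeff (σ f) := by
  have h : X ∣ σ (f - C (constantCoeff f)) := X_dvd_aut σ (by rw [X_dvd_iff]; simp)
  rw [X_dvd_iff, map_sub, map_sub, sub_eq_zero] at h
  exact h.symm

/-- The action on constants. -/
noncomputable def resAut (F : Type*) [Field F] : RingAut F⟦X⟧ →* RingAut F where
  toFun σ := RingEquiv.ofRingHom
    ((constantCoeff (R := F)).comp ((σ : F⟦X⟧ →+* F⟦X⟧).comp C))
    ((constantCoeff (R := F)).comp (((σ⁻¹ : RingAut F⟦X⟧) : F⟦X⟧ →+* F⟦X⟧).comp C))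
    (by
      ext c
      change constantCoeff (σ (C (constantCoeff ((σ⁻¹ : RingAut F⟦X⟧) (C c))))) = c
      rw [constantCoeff_aut, ← RingAut.mul_apply, mul_inv_cancel]
      simp)
    (by
      ext c
      change constantCoeff ((σ⁻¹ : RingAut F⟦X⟧) (C (constantCoeff (σ (C c))))) = c
      rw [constantCoeff_aut, ← RingAut.mul_apply, inv_mul_cancel]
      simp)
  map_one' := by
    ext c
    change constantCoeff (C c) = c
    simp
  map_mul' σ τ := by
    ext c
    change constantCoeff (σ (τ (C c))) = constantCoeff (σ (C (constantCoeff (τ (C c)))))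
    rw [constantCoeff_aut]

theorem resAut_apply {F : Type*} [Field F] (σ : RingAut F⟦X⟧) (c : F) :
    resAut F σ c = constantCoeff (σ (C c)) := rfl

theorem fix_C_of_resAut {F : Type*} [Field F] [Finite F] {σ : RingAut F⟦X⟧} (h : resAut F σ = 1)
    (c : F) : σ (C c) = C c := by
  have := Fintype.ofFinite F
  set q := Fintype.card F with hq
  have hq1 : 1 < q := Fintype.one_lt_card
  have h0 : constantCoeff (σ (C c)) = c := by
    rw [← resAut_apply, h]; rfl
  obtain ⟨p, hp⟩ := CharP.exists F
  obtain ⟨n, hpp, hn⟩ := FiniteField.card F p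
  have : Fact p.Prime := ⟨hpp⟩
  have hch : CharP F⟦X⟧ p :=
    charP_of_injective_ringHom (f := (C : F →+* F⟦X⟧)) PowerSeries.C_injective p
  have hexp : ExpChar F⟦X⟧ p := ExpChar.prime hpp
  set g := σ (C c) - C c with hg
  have hgX : X ∣ g := by rw [X_dvd_iff, hg]; simp [h0]
  have hgq : g ^ q = g := by
    rw [hq, hn, hg, sub_pow_expChar_pow, ← map_pow, ← map_pow, ← hn, FiniteField.pow_card]
  have h2 : g * (1 - g ^ (q - 1)) = 0 := by
    have : g ^ q = g * g ^ (q - 1) := by rw [← pow_succ']; congr 1; omega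
    linear_combination this - hgq
  rcases mul_eq_zero.mp h2 with h3 | h3
  · exact sub_eq_zero.mp h3
  · exfalso
    have h4 := congrArg constantCoeff h3
    rw [map_sub, map_pow, X_dvd_iff.mp hgX, zero_pow (by omega)] at h4
    simp at h4

theorem coeff_one_mul_of_dvd {F : Type*} [Field F] {f g : F⟦X⟧} (hf : X ∣ f) :
    coeff 1 (f * g) = coeff 1 f * constantCoeff g := by
  obtain ⟨v, rfl⟩ := hf
  rw [mul_assoc, show 1 = 0 + 1 from rfl, coeff_succ_X_mul, coeff_succ_X_mul]
  simp

/-- The tangent character on automorphisms fixing the constants. -/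
noncomputable def tangent (F : Type*) [Field F] : (resAut F).ker →* Fˣ :=
  MonoidHom.toHomUnits
    { toFun := fun σ => coeff 1 ((σ : RingAut F⟦X⟧) X)
      map_one' := by simp
      map_mul' := by
        rintro ⟨σ, hσ⟩ ⟨τ, hτ⟩
        change coeff 1 (σ (τ X)) = coeff 1 (σ X) * coeff 1 (τ X)
        obtain ⟨v, hv⟩ := X_dvd_aut τ (dvd_refl X)
        rw [hv, map_mul, coeff_one_mul_of_dvd (X_dvd_aut σ dvd_rfl), ← constantCoeff_aut,
          ← resAut_apply, (MonoidHom.mem_ker).mp hσ, show 1 = 0 + 1 from rfl, coeff_succ_X_mul]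
        simp }

theorem tangent_apply {F : Type*} [Field F] (σ : (resAut F).ker) :
    (tangent F σ : F) = coeff 1 ((σ : RingAut F⟦X⟧) X) := rfl

theorem wild_trivial {F : Type*} [Field F] [Finite F] (p : ℕ) [CharP F p]
    (σ : (resAut F).ker) (hσ : tangent F σ = 1) (N : ℕ) (hN : ¬ p ∣ N) (h : σ ^ N = 1) :
    σ = 1 := by
  have hC : ∀ c, (σ : RingAut F⟦X⟧) (C c) = C c := fix_C_of_resAut σ.2
  have hj : ∀ j : ℕ, coeff 1 (((σ ^ j : (resAut F).ker) : RingAut F⟦X⟧) X) = 1 := by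
    intro j
    rw [← tangent_apply, map_pow, hσ]; simp
  set u : F⟦X⟧ := ∑ j ∈ Finset.range N, ((σ ^ j : (resAut F).ker) : RingAut F⟦X⟧) X with hu
  have hu0 : constantCoeff u = 0 := by
    rw [hu, map_sum]
    exact Finset.sum_eq_zero fun j _ => X_dvd_iff.mp (X_dvd_aut _ dvd_rfl)
  have hu1 : coeff 1 u ≠ 0 := by
    rw [hu, map_sum, Finset.sum_congr rfl (fun j _ => hj j)]
    simpa using fun h => hN ((CharP.cast_eq_zero_iff F p N).mp h)
  have hfix : (σ : RingAut F⟦X⟧) u = u := by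
    have e : ∀ j : ℕ, (σ : RingAut F⟦X⟧) (((σ ^ j : (resAut F).ker) : RingAut F⟦X⟧) X) =
        ((σ ^ (j + 1) : (resAut F).ker) : RingAut F⟦X⟧) X := by
      intro j
      rw [pow_succ']; rfl
    rw [hu, map_sum, Finset.sum_congr rfl (fun j _ => e j)]
    have h1 := Finset.sum_range_succ
      (fun j => ((σ ^ j : (resAut F).ker) : RingAut F⟦X⟧) X) N
    rw [Finset.sum_range_succ', h] at h1
    simpa using h1
  ext1
  ext1 f
  exact endo_eq_id ((σ : RingAut F⟦X⟧) : F⟦X⟧ →+* F⟦X⟧) hC u hu0 hu1 hfix f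

theorem card_dvd_of_finite {F : Type*} [Field F] [Finite F] [Finite (RingAut F)]
    (p : ℕ) [Fact p.Prime] [CharP F p]
    {G : Type*} [Group G] [Finite G] (ρ : G →* RingAut F⟦X⟧) (hρ : Function.Injective ρ) :
    ∃ k : ℕ, Nat.card G ∣ Nat.card (RingAut F) * (Nat.card F - 1) * p ^ k := by
  let h1 : G →* RingAut F := (resAut F).comp ρ
  let r : h1.ker →* (resAut F).ker :=
    (ρ.comp h1.ker.subtype).codRestrict _ (fun g => g.2)
  have hr : Function.Injective r := by
    intro a b h
    apply Subtype.ext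
    apply hρ
    exact congrArg Subtype.val h
  let h2 : h1.ker →* Fˣ := (tangent F).comp r
  have hP : IsPGroup p h2.ker := by
    intro g
    have hN := orderOf_pos g
    obtain ⟨a, N', hN', e⟩ := Nat.exists_eq_pow_mul_and_not_dvd hN.ne' p
      (Fact.out : p.Prime).ne_one
    refine ⟨a, ?_⟩
    have hg : (g ^ (p ^ a)) ^ N' = 1 := by
      rw [← pow_mul, ← e, pow_orderOf_eq_one]
    set x := g ^ (p ^ a)
    have := wild_trivial p (r x) x.2 N' hN' (by
      rw [← map_pow]
      have : ((x : h1.ker)) ^ N' = 1 := congrArg Subtype.val hg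
      rw [this, map_one])
    apply Subtype.ext
    apply hr
    rw [this]
    simp
  obtain ⟨k, hk⟩ := IsPGroup.iff_card.mp hP
  refine ⟨k, ?_⟩
  rw [← Subgroup.card_mul_index h1.ker, ← Subgroup.card_mul_index h2.ker, hk,
    Subgroup.index_ker, Subgroup.index_ker]
  have d1 : Nat.card h1.range ∣ Nat.card (RingAut F) := Subgroup.card_subgroup_dvd_card _
  have d2 : Nat.card h2.range ∣ Nat.card F - 1 := by
    rw [← Nat.card_units]
    exact Subgroup.card_subgroup_dvd_card _
  have := mul_dvd_mul (mul_dvd_mul d1 d2) (dvd_refl (p ^ k))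
  refine dvd_trans (dvd_of_eq ?_) this
  ring

theorem exists_root_one_unit {F : Type*} [Field F] (p : ℕ) [CharP F p] {a : F⟦X⟧} (ha : X ∣ a)
    (N : ℕ) (hN : ¬ p ∣ N) : ∃ g : F⟦X⟧, g ^ N = 1 + a := by
  have hN0 : N ≠ 0 := fun h => hN (h ▸ dvd_zero p)
  obtain ⟨g, hg, -⟩ := HenselianRing.is_henselian (R := F⟦X⟧) (I := Ideal.span {X})
    (Polynomial.X ^ N - Polynomial.C (1 + a)) (Polynomial.monic_X_pow_sub_C _ hN0) 1
    (by
      rw [Ideal.mem_span_singleton]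
      simpa using ha)
    (by
      apply IsUnit.map
      rw [PowerSeries.isUnit_iff_constantCoeff]
      have : (N : F) ≠ 0 := fun h => hN ((CharP.cast_eq_zero_iff F p N).mp h)
      simpa [Polynomial.derivative_X_pow] using this)
  refine ⟨g, ?_⟩
  have : g ^ N - (1 + a) = 0 := by simpa [Polynomial.IsRoot] using hg
  exact sub_eq_zero.mp this

theorem order_pow_laurent {F : Type*} [Field F] (g : LaurentSeries F) (N : ℕ) :
    (g ^ N).order = N * g.order := by
  rw [HahnSeries.order_pow]; simp

theorem leadingCoeff_pow_laurent {F : Type*} [Field F] (g : LaurentSeries F) (N : ℕ) :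
    (g ^ N).leadingCoeff = g.leadingCoeff ^ N := by
  induction N with
  | zero => simp
  | succ n ih => rw [pow_succ, pow_succ, HahnSeries.leadingCoeff_mul, ih]

theorem one_unit_of_roots {F : Type*} [Field F] [Finite F] (p : ℕ) [Fact p.Prime] [CharP F p]
    {f : LaurentSeries F} (hf : f ≠ 0) (h : ∀ N : ℕ, ¬ p ∣ N → ∃ g, g ^ N = f) :
    ∃ a : F⟦X⟧, X ∣ a ∧ f = 1 + algebraMap F⟦X⟧ (LaurentSeries F) a := by
  have hp : p.Prime := Fact.out
  have hord : f.order = 0 := by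
    obtain ⟨g, hg⟩ := h (p * f.order.natAbs + 1) (by
      intro hd
      have := (Nat.dvd_add_right (Dvd.intro _ rfl)).mp hd
      exact hp.one_lt.ne' (Nat.dvd_one.mp this))
    have h1 : f.order = ((p * f.order.natAbs + 1 : ℕ) : ℤ) * g.order := by
      rw [← order_pow_laurent, hg]
    apply Int.eq_zero_of_abs_lt_dvd (Dvd.intro _ h1.symm)
    have := hp.two_le
    push_cast
    nlinarith [abs_nonneg f.order]
  have hlc : f.leadingCoeff = 1 := by
    have := Fintype.ofFinite F
    obtain ⟨n, hpp, hn⟩ := FiniteField.card F p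
    obtain ⟨g, hg⟩ := h (Fintype.card F - 1) (by
      rw [hn]
      intro hd
      have h1 : p ∣ p ^ (n : ℕ) := dvd_pow_self p n.ne_zero
      have h2 := (Nat.dvd_sub_iff_right (Nat.one_le_pow _ _ hp.pos) h1).mp hd
      exact hp.one_lt.ne' (Nat.dvd_one.mp h2))
    have hc : 1 < Fintype.card F := Fintype.one_lt_card
    rw [← hg, leadingCoeff_pow_laurent]
    apply FiniteField.pow_card_sub_one_eq_one
    rw [HahnSeries.leadingCoeff_ne_zero]
    rintro rfl
    rw [zero_pow (by omega)] at hg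
    exact hf hg.symm
  refine ⟨f.powerSeriesPart - 1, ?_, ?_⟩
  · rw [X_dvd_iff, map_sub, ← coeff_zero_eq_constantCoeff_apply,
      LaurentSeries.powerSeriesPart_coeff]
    rw [HahnSeries.leadingCoeff_eq] at hlc
    simp [hlc]
  · have := LaurentSeries.single_order_mul_powerSeriesPart f
    rw [hord] at this
    rw [map_sub, map_one, add_sub_cancel]
    conv_lhs => rw [← this]
    exact one_mul _

theorem integral_aut {F : Type*} [Field F] [Finite F] (p : ℕ) [Fact p.Prime] [CharP F p]
    (σ : RingAut (LaurentSeries F)) (f : F⟦X⟧) :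
    ∃ g : F⟦X⟧, algebraMap F⟦X⟧ (LaurentSeries F) g =
      σ (algebraMap F⟦X⟧ (LaurentSeries F) f) := by
  have hinj := IsFractionRing.injective F⟦X⟧ (LaurentSeries F)
  have hm : ∀ a : F⟦X⟧, X ∣ a → ∃ g : F⟦X⟧, algebraMap F⟦X⟧ (LaurentSeries F) g =
      σ (algebraMap F⟦X⟧ (LaurentSeries F) a) := by
    intro a ha
    have hne : σ (algebraMap F⟦X⟧ (LaurentSeries F) (1 + a)) ≠ 0 := by
      intro h
      rw [map_eq_zero_iff σ σ.injective, map_eq_zero_iff _ hinj] at h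
      have := congrArg constantCoeff h
      rw [map_add, X_dvd_iff.mp ha] at this
      simp at this
    obtain ⟨b, -, hb⟩ := one_unit_of_roots p hne (by
      intro N hN
      obtain ⟨g, hg⟩ := exists_root_one_unit p ha N hN
      refine ⟨σ (algebraMap F⟦X⟧ (LaurentSeries F) g), ?_⟩
      rw [← map_pow, ← map_pow, hg])
    refine ⟨b, ?_⟩
    rw [map_add, map_add, map_one, map_one] at hb
    exact (add_left_cancel hb).symm
  have hc : ∀ c : F, ∃ g : F⟦X⟧, algebraMap F⟦X⟧ (LaurentSeries F) g =
      σ (algebraMap F⟦X⟧ (LaurentSeries F) (C c)) := by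
    intro c
    have := Fintype.ofFinite F
    have h1 : 1 < Fintype.card F := Fintype.one_lt_card
    set y := σ (algebraMap F⟦X⟧ (LaurentSeries F) (C c)) with hy
    have hyq : y ^ (Fintype.card F) = y := by
      rw [hy, ← map_pow, ← map_pow, ← map_pow, FiniteField.pow_card]
    have ho : y.order = 0 := by
      have h2 := order_pow_laurent y (Fintype.card F)
      rw [hyq] at h2
      have h3 : ((Fintype.card F : ℤ) - 1) * y.order = 0 := by linarith
      rcases mul_eq_zero.mp h3 with h4 | h4
      · omega
      · exact h4
    refine ⟨y.powerSeriesPart, ?_⟩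
    have := LaurentSeries.single_order_mul_powerSeriesPart y
    rw [ho] at this
    conv_rhs => rw [← this]
    exact (one_mul _).symm
  obtain ⟨g1, h1⟩ := hc (constantCoeff f)
  obtain ⟨g2, h2⟩ := hm (f - C (constantCoeff f)) (by rw [X_dvd_iff]; simp)
  refine ⟨g1 + g2, ?_⟩
  rw [map_add, h1, h2, ← map_add, ← map_add]
  congr 2
  ring

/-- Restriction of automorphisms preserving a subring. -/
noncomputable def restrAut (A K : Type*) [CommRing A] [Field K] [Algebra A K]
    (hinj : Function.Injective (algebraMap A K))
    (h : ∀ (σ : RingAut K) (a : A), ∃ b : A, algebraMap A K b = σ (algebraMap A K a)) :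
    RingAut K →* RingAut A where
  toFun σ :=
    { toFun := fun a => (h σ a).choose
      invFun := fun a => (h σ⁻¹ a).choose
      left_inv := fun a => by
        apply hinj
        rw [(h σ⁻¹ _).choose_spec, (h σ a).choose_spec]
        exact σ.symm_apply_apply _
      right_inv := fun a => by
        apply hinj
        rw [(h σ _).choose_spec, (h σ⁻¹ a).choose_spec]
        exact σ.apply_symm_apply _
      map_mul' := fun a b => by
        apply hinj
        refine (h σ _).choose_spec.trans ?_
        rw [map_mul, map_mul, map_mul, (h σ a).choose_spec, (h σ b).choose_spec]
      map_add' := fun a b => by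
        apply hinj
        refine (h σ _).choose_spec.trans ?_
        rw [map_add, map_add, map_add, (h σ a).choose_spec, (h σ b).choose_spec] }
  map_one' := by
    ext a
    apply hinj
    exact (h 1 a).choose_spec
  map_mul' σ τ := by
    ext a
    apply hinj
    refine (h (σ * τ) a).choose_spec.trans ?_
    refine Eq.trans ?_ (h σ (h τ a).choose).choose_spec.symm
    rw [(h τ a).choose_spec]
    rfl

theorem restrAut_spec (A K : Type*) [CommRing A] [Field K] [Algebra A K]
    (hinj : Function.Injective (algebraMap A K))
    (h : ∀ (σ : RingAut K) (a : A), ∃ b : A, algebraMap A K b = σ (algebraMap A K a))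
    (σ : RingAut K) (a : A) :
    algebraMap A K (restrAut A K hinj h σ a) = σ (algebraMap A K a) := (h σ a).choose_spec

theorem galois_degree_dvd (p : ℕ) [Fact p.Prime] (i : ℕ) (hi : 0 < i)
    (K' : Subfield (LaurentSeries (GaloisField p i)))
    (h1 : FiniteDimensional ↥K' (LaurentSeries (GaloisField p i)))
    (h2 : IsGalois ↥K' (LaurentSeries (GaloisField p i))) :
    ∃ k : ℕ, Module.finrank ↥K' (LaurentSeries (GaloisField p i)) ∣ i * (p ^ i - 1) * p ^ k := by
  have hc := card_ringAut p i hi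
  have : Finite (RingAut (GaloisField p i)) := Nat.finite_of_card_ne_zero (by omega)
  have hinj := IsFractionRing.injective (GaloisField p i)⟦X⟧ (LaurentSeries (GaloisField p i))
  let G := LaurentSeries (GaloisField p i) ≃ₐ[↥K'] LaurentSeries (GaloisField p i)
  let r := restrAut (GaloisField p i)⟦X⟧ (LaurentSeries (GaloisField p i)) hinj (integral_aut p)
  have hr : Function.Injective r := by
    intro σ τ h
    apply aut_ext_of_coe (A := (GaloisField p i)⟦X⟧)
    intro x
    rw [← restrAut_spec _ _ hinj (integral_aut p) σ, ← restrAut_spec _ _ hinj (integral_aut p) τ]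
    exact congrArg _ (congrArg (fun e : RingAut (GaloisField p i)⟦X⟧ => e x) h)
  let t : G →* RingAut (LaurentSeries (GaloisField p i)) :=
    { toFun := fun g => g.toRingEquiv
      map_one' := by ext; rfl
      map_mul' := fun a b => by ext; rfl }
  have ht : Function.Injective t := by
    intro a b h
    apply AlgEquiv.ext
    intro x
    exact congrArg (fun e : RingAut (LaurentSeries (GaloisField p i)) => e x) h
  obtain ⟨k, hk⟩ := card_dvd_of_finite p (r.comp t) (hr.comp ht)
  refine ⟨k, ?_⟩
  rw [hc, GaloisField.card p i hi.ne'] at hk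
  rw [← IsGalois.card_aut_eq_finrank]
  exact hk

theorem exists_wild (p : ℕ) [Fact p.Prime] (i : ℕ) (s : ℕ) :
    ∃ K' : Subfield (LaurentSeries (GaloisField p i)),
      FiniteDimensional ↥K' (LaurentSeries (GaloisField p i)) ∧
      IsGalois ↥K' (LaurentSeries (GaloisField p i)) ∧
      Module.finrank ↥K' (LaurentSeries (GaloisField p i)) = p ^ (s + 1) := by
  obtain ⟨σ, hσ⟩ := exists_wild_aut (F := GaloisField p i) p s
  have hfin : Nat.card (Subgroup.zpowers σ) = p ^ (s + 1) := by rw [Nat.card_zpowers, hσ]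
  have : Finite (Subgroup.zpowers σ) := Nat.finite_of_card_ne_zero (by
    rw [hfin]; exact pow_ne_zero _ (Fact.out : p.Prime).ne_zero)
  obtain ⟨K', h1, h2, h3⟩ := exists_subfield_of_group
    ((liftAut (GaloisField p i)⟦X⟧ (LaurentSeries (GaloisField p i))).comp
      (Subgroup.zpowers σ).subtype)
    ((liftAut_injective _ _).comp (Subgroup.subtype_injective _))
  exact ⟨K', h1, h2, h3.trans hfin⟩

theorem arith_back {p d n m g k : ℕ} (hp : p.Prime) (hn : 0 < n) (hd : 0 < d)
    (h1 : Nat.gcd d p = 1) (h2 : Nat.gcd (n * d) m ∣ n) (hg : g ∣ m * p ^ k) :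
    Nat.gcd (n * d) g ∣ n := by
  set e := Nat.gcd (n * d) g with he
  have he0 : e ≠ 0 := (Nat.gcd_pos_of_pos_left _ (Nat.mul_pos hn hd)).ne'
  obtain ⟨b, e', hb, hee⟩ := Nat.exists_eq_pow_mul_and_not_dvd he0 p hp.ne_one
  have hend : e ∣ n * d := Nat.gcd_dvd_left _ _
  have heg : e ∣ m * p ^ k := (Nat.gcd_dvd_right _ _).trans hg
  have c1 : Nat.Coprime e' p := (Nat.Coprime.symm ((Nat.Prime.coprime_iff_not_dvd hp).mpr hb))
  have d1 : p ^ b ∣ n := by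
    have : p ^ b ∣ n * d := (Dvd.intro _ hee.symm).trans hend
    exact (Nat.Coprime.pow_left b (Nat.Coprime.symm h1)).dvd_of_dvd_mul_right this
  have de' : e' ∣ e := Dvd.intro_left _ hee.symm
  have d2 : e' ∣ n := by
    refine dvd_trans (Nat.dvd_gcd (de'.trans hend) ?_) h2
    exact (Nat.Coprime.pow_right k c1).dvd_of_dvd_mul_right (de'.trans heg)
  rw [hee]
  exact Nat.Coprime.mul_dvd_of_dvd_of_dvd (Nat.Coprime.pow_left b c1.symm) d1 d2

theorem arith_wild {p d n : ℕ} (hp : p.Prime) (hn : 0 < n)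
    (h : ∀ s, Nat.gcd (n * d) (p ^ (s + 1)) ∣ n) : Nat.gcd d p = 1 := by
  by_contra hne
  have hpd : p ∣ d := by
    by_contra hnd
    exact hne (Nat.Coprime.symm ((Nat.Prime.coprime_iff_not_dvd hp).mpr hnd))
  obtain ⟨b, n', hb, hee⟩ := Nat.exists_eq_pow_mul_and_not_dvd hn.ne' p hp.ne_one
  have h1 : p ^ (b + 1) ∣ n * d := by
    rw [pow_succ]
    exact mul_dvd_mul (Dvd.intro _ hee.symm) hpd
  have h2 := (Nat.dvd_gcd h1 dvd_rfl).trans (h b)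
  rw [hee, pow_succ] at h2
  exact hb (Nat.dvd_of_mul_dvd_mul_left (pow_pos hp.pos b) h2)

end LaurentAux

open LaurentAux in
/-- Let `K = 𝔽_{p^i}((T))`, `D` a central division algebra of degree `d`
over `K` and `n ≥ 1`. Then `gcd(nd, [K:K'])` divides `n` for every subfield `K' ≤ K` with
`K/K'` finite Galois if and only if `gcd(d, p) = 1` and `gcd(nd, i(p^i − 1))` divides `n`. -/
theorem divisibility_condition_laurent (p : ℕ) [Fact p.Prime] (i : ℕ) (hi : 0 < i)
    (d n : ℕ) (hd : 0 < d) (hn : 0 < n)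
    (D : Type) [DivisionRing D] [Algebra (LaurentSeries (GaloisField p i)) D]
    (hdeg : Module.finrank (LaurentSeries (GaloisField p i)) D = d * d)
    (hcentral : Subalgebra.center (LaurentSeries (GaloisField p i)) D = ⊥) :
    (∀ K' : Subfield (LaurentSeries (GaloisField p i)),
        FiniteDimensional ↥K' (LaurentSeries (GaloisField p i)) →
        IsGalois ↥K' (LaurentSeries (GaloisField p i)) →
        Nat.gcd (n * d) (Module.finrank ↥K' (LaurentSeries (GaloisField p i))) ∣ n)
      ↔ (Nat.gcd d p = 1 ∧ Nat.gcd (n * d) (i * (p ^ i - 1)) ∣ n) := by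
  constructor
  · intro h
    refine ⟨arith_wild Fact.out hn fun s => ?_, ?_⟩
    · obtain ⟨K', h1, h2, h3⟩ := exists_wild p i s
      rw [← h3]
      exact h K' h1 h2
    · obtain ⟨K', h1, h2, h3⟩ := exists_tame p i hi
      rw [← h3]
      exact h K' h1 h2
  · rintro ⟨h1, h2⟩ K' f1 f2
    obtain ⟨k, hk⟩ := galois_degree_dvd p i hi K' f1 f2
    exact arith_back Fact.out hn hd h1 h2 hk
end

section
/- Let S_3 act on a set of three objects {l_3, l_3', l_3''} being the three conjugate non-normal cubic subextensions of an S_3-Galois extension l/k. Then any field automorphism β of l_3 with β(k) = k extends uniquely to an automorphism β₀ of l with β₀(k) = k such that β₀ commutes with every element of Gal(l/k). -/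
set_option synthInstance.maxSize 100000 in
set_option synthInstance.maxHeartbeats 400000 in
set_option maxRecDepth 100000 in
theorem s3_aux : ∀ t : Equiv.Perm (Fin 3), t ≠ 1 → t * t = 1 →
    ∃ s : Equiv.Perm (Fin 3), (s * s = 1 ∧ s ≠ 1 ∧ s ≠ t) ∧
      (∀ y : Equiv.Perm (Fin 3), y * y = 1 → y ≠ 1 → y ≠ t → (y = s ∨ y = t * s * t)) ∧
      (∀ x : Equiv.Perm (Fin 3),
        x = 1 ∨ x = t ∨ x = s ∨ x = t * s ∨ x = s * t ∨ x = t * s * t) := by decide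

theorem s3_center : ∀ t : Equiv.Perm (Fin 3), (∀ x : Equiv.Perm (Fin 3), t * x = x * t) → t = 1 := by
  decide

theorem s3_inj (f : Equiv.Perm (Fin 3) →* Equiv.Perm (Fin 3)) (hf : Function.Injective f)
    (t : Equiv.Perm (Fin 3)) (ht : t ≠ 1) (htt : t * t = 1) (hft : f t = t) :
    (∀ x, f x = x) ∨ (∀ x, f x = t * x * t) := by
  obtain ⟨s, ⟨h1, h2, h3⟩, h4, h5⟩ := s3_aux t ht htt
  have htt' : ∀ x, t * (t * x) = x := fun x => by rw [← mul_assoc, htt, one_mul]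
  rcases h4 (f s) (by rw [← map_mul, h1, map_one])
    (fun h => h2 (hf (by rw [h, map_one]))) (fun h => h3 (hf (by rw [h, hft]))) with h | h
  · left
    intro x
    rcases h5 x with rfl | rfl | rfl | rfl | rfl | rfl <;> simp [h, hft]
  · right
    intro x
    rcases h5 x with rfl | rfl | rfl | rfl | rfl | rfl <;>
      simp [h, hft, mul_assoc, htt, htt']

theorem grp_inj {G : Type*} [Group G] (e : G ≃* Equiv.Perm (Fin 3)) (f : G →* G)
    (hf : Function.Injective f) (t : G) (ht : t ≠ 1) (htt : t * t = 1) (hft : f t = t) :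
    (∀ x, f x = x) ∨ (∀ x, f x = t * x * t) := by
  have := s3_inj ((e.toMonoidHom.comp f).comp e.symm.toMonoidHom)
    (e.injective.comp (hf.comp e.symm.injective)) (e t) (by simpa using ht)
    (by rw [← map_mul, htt, map_one]) (by simp [hft])
  refine this.imp ?_ ?_
  · intro h x
    have := h (e x)
    simpa using this
  · intro h x
    have := h (e x)
    apply e.injective
    simpa using this

theorem lift_aux {F E K : Type*} [Field F] [Field E] [Field K] [Algebra F E] [Algebra F K]
    [FiniteDimensional F E] [Normal F K] (L : IntermediateField F E)
    (f : L →ₐ[F] K) (hL : IntermediateField.normalClosure F L E = ⊤) :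
    ∃ φ : E →ₐ[F] K, ∀ x : L, φ x = f x := by
  let S : Set E := {s | (((minpoly F s).map (algebraMap F K)).Splits)}
  have key : ∀ x : L, ((minpoly F x).map (algebraMap F K)).Splits := by
    intro x
    rw [← minpoly.algHom_eq f f.injective x]
    exact Normal.splits inferInstance _
  have hS : IntermediateField.adjoin F S = ⊤ := by
    rw [eq_top_iff, ← hL, IntermediateField.normalClosure]
    refine iSup_le fun g => ?_
    rintro _ ⟨x, rfl⟩
    apply IntermediateField.subset_adjoin
    have := key x
    rw [← minpoly.algHom_eq g g.injective x] at this
    exact this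
  obtain ⟨φ, hφ⟩ := IntermediateField.exists_algHom_of_adjoin_splits (L := L) (S := S)
    (fun s hs => ⟨Algebra.IsIntegral.isIntegral s, hs⟩) f hS
  exact ⟨φ, fun x => DFunLike.congr_fun hφ x⟩

theorem lift_aux2 {F E F' K : Type*} [Field F] [Field E] [Field F'] [Field K] [Algebra F E]
    [Algebra F' K] [FiniteDimensional F E] [FiniteDimensional F' K] [Normal F' K]
    (L : IntermediateField F E)
    (σ : F ≃+* F') (f : L →+* K) (hf : ∀ a, f (algebraMap F L a) = algebraMap F' K (σ a))
    (hrank : Module.finrank F E = Module.finrank F' K)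
    (hL : IntermediateField.normalClosure F L E = ⊤) :
    ∃ φ : E ≃+* K, ∀ x : L, φ x = f x := by
  letI : Algebra F K := ((algebraMap F' K).comp σ.toRingHom).toAlgebra
  have : Normal F K := Normal.of_equiv_equiv (F := F') (E := K) (f := σ.symm)
    (g := RingEquiv.refl K) (by
      ext x
      change algebraMap F' K (σ (σ.symm x)) = _
      simp)
  have h2 : Module.finrank F K = Module.finrank F' K :=
    Algebra.finrank_eq_of_equiv_equiv σ (RingEquiv.refl K) (by ext x; rfl)
  have hpos : 0 < Module.finrank F K := h2 ▸ Module.finrank_pos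
  haveI : FiniteDimensional F K := FiniteDimensional.of_finrank_pos hpos
  obtain ⟨φ, hφ⟩ := lift_aux (K := K) L { f with commutes' := hf } hL
  refine ⟨RingEquiv.ofBijective φ.toRingHom ⟨φ.injective, ?_⟩, hφ⟩
  exact (LinearMap.injective_iff_surjective_of_finrank_eq_finrank (hrank.trans h2.symm)
    (f := φ.toLinearMap)).1 φ.injective

/-- Conjugation by a `σ`-semilinear ring automorphism. -/
noncomputable def conjAux {k l : Type*} [Field k] [Field l] [Algebra k l] (σ : k ≃+* k)
    (φ : l ≃+* l) (h : ∀ a, φ (algebraMap k l a) = algebraMap k l (σ a)) :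
    (l ≃ₐ[k] l) →* (l ≃ₐ[k] l) where
  toFun γ := AlgEquiv.ofRingEquiv (f := φ.symm.trans (γ.toRingEquiv.trans φ)) (by
    intro a
    have : φ.symm (algebraMap k l a) = algebraMap k l (σ.symm a) := by
      rw [RingEquiv.symm_apply_eq, h]; simp
    simp [this, h])
  map_one' := by ext x; simp
  map_mul' a b := by ext x; simp

theorem conjAux_apply {k l : Type*} [Field k] [Field l] [Algebra k l] (σ : k ≃+* k)
    (φ : l ≃+* l) (h : ∀ a, φ (algebraMap k l a) = algebraMap k l (σ a)) (γ : l ≃ₐ[k] l) (x : l) :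
    conjAux σ φ h γ x = φ (γ (φ.symm x)) := rfl

theorem exists_sigma {k M : Type*} [Field k] [Field M] [Algebra k M] (β : M ≃+* M)
    (h : Subring.map β.toRingHom (algebraMap k M).range = (algebraMap k M).range) :
    ∃ σ : k ≃+* k, ∀ a, β (algebraMap k M a) = algebraMap k M (σ a) := by
  let e0 : k ≃+* (algebraMap k M).range := RingEquiv.ofBijective (algebraMap k M).rangeRestrict
    ⟨fun a b hab => (algebraMap k M).injective (congrArg Subtype.val hab),
      (algebraMap k M).rangeRestrict_surjective⟩
  have he0 : ∀ y, algebraMap k M (e0.symm y) = y := fun y =>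
    congrArg Subtype.val (e0.apply_symm_apply y)
  refine ⟨e0.trans (β.subringMap.trans ((RingEquiv.subringCongr h).trans e0.symm)), fun a => ?_⟩
  simp only [RingEquiv.trans_apply, he0]
  rfl

/-- Let `l/k` be an `S₃`-Galois extension and `l₃` one of the three
conjugate non-normal cubic subextensions of `l/k`. Then any field automorphism `β` of `l₃`
with `β(k) = k` extends uniquely to an automorphism `β₀` of `l` with `β₀(k) = k` commuting
with every element of `Gal(l/k)`. -/
theorem unique_commuting_extension_S3
    (k l : Type*) [Field k] [Field l] [Algebra k l] [FiniteDimensional k l] [IsGalois k l]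
    (hS3 : Nonempty ((l ≃ₐ[k] l) ≃* Equiv.Perm (Fin 3)))
    (l3 : IntermediateField k l) (h3 : Module.finrank k ↥l3 = 3)
    (hnonnormal : ¬ Normal k ↥l3)
    (β : ↥l3 ≃+* ↥l3)
    (hβk : Subring.map β.toRingHom (algebraMap k ↥l3).range = (algebraMap k ↥l3).range) :
    ∃! β₀ : l ≃+* l,
      (∀ x : ↥l3, β₀ (x : l) = ((β x : ↥l3) : l)) ∧
      Subring.map β₀.toRingHom (algebraMap k l).range = (algebraMap k l).range ∧
      ∀ (γ : l ≃ₐ[k] l) (x : l), β₀ (γ x) = γ (β₀ x) := by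
  obtain ⟨e⟩ := hS3
  obtain ⟨σ, hσ⟩ := exists_sigma β hβk
  have hrank : Module.finrank k l = 6 := by
    rw [← IsGalois.card_aut_eq_finrank, Nat.card_congr e.toEquiv, Nat.card_eq_fintype_card,
      Fintype.card_perm]
    rfl
  -- the normal closure of `l3` is everything
  have hN : IntermediateField.normalClosure k l3 l = ⊤ := by
    set N := IntermediateField.normalClosure k l3 l with hNdef
    have hle : l3 ≤ N := IntermediateField.le_normalClosure l3
    have d1 : 3 ∣ Module.finrank k N := h3 ▸ IntermediateField.finrank_dvd_of_le_right hle
    have hmul : Module.finrank k N * Module.finrank N l = 6 :=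
      (Module.finrank_mul_finrank k N l).trans hrank
    have hne : Module.finrank k N ≠ 3 := by
      intro h
      have := IntermediateField.eq_of_le_of_finrank_eq hle (h3.trans h.symm)
      apply hnonnormal
      rw [this]
      exact normalClosure.normal k l3 l
    obtain ⟨c, hc⟩ := d1
    have hN1 : Module.finrank N l = 1 := by
      rw [hc] at hmul hne
      have h2 : c * Module.finrank N l = 2 := by
        have : 3 * (c * Module.finrank N l) = 3 * 2 := by rw [← mul_assoc, hmul]
        omega
      have hc2 : c ∣ 2 := ⟨_, h2.symm⟩
      rcases (Nat.dvd_prime Nat.prime_two).1 hc2 with rfl | rfl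
      · simp at hne
      · omega
    exact IntermediateField.finrank_eq_one_iff_eq_top.1 hN1
  obtain ⟨φ, hφ⟩ := lift_aux2 l3 σ (l3.val.toRingHom.comp β.toRingHom)
    (fun a => congrArg Subtype.val (hσ a)) rfl hN
  replace hφ : ∀ x : l3, φ (x : l) = (β x : l3) := hφ
  have hφk : ∀ a, φ (algebraMap k l a) = algebraMap k l (σ a) := fun a =>
    (hφ (algebraMap k l3 a)).trans (congrArg Subtype.val (hσ a))
  have hφs : ∀ x : l3, φ.symm (x : l) = (β.symm x : l3) := fun x => by
    rw [RingEquiv.symm_apply_eq, hφ]; simp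
  -- the nontrivial element of the fixing subgroup
  have hcard : Nat.card l3.fixingSubgroup = 2 := by
    rw [IsGalois.card_fixingSubgroup_eq_finrank]
    have := Module.finrank_mul_finrank k l3 l
    rw [h3, hrank] at this
    omega
  obtain ⟨τ, hτ1, hτ⟩ : ∃ τ : l3.fixingSubgroup, τ ≠ 1 ∧ ∀ g : l3.fixingSubgroup, g = 1 ∨ g = τ := by
    obtain ⟨y, hy, hu⟩ := (Nat.card_eq_two_iff' (1 : l3.fixingSubgroup)).1 hcard
    refine ⟨y, hy, fun g => ?_⟩
    by_cases hg : g = 1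
    · exact Or.inl hg
    · exact Or.inr (hu g hg)
  have hτ1' : (τ : l ≃ₐ[k] l) ≠ 1 := fun h => hτ1 (Subtype.ext h)
  have hττ : (τ : l ≃ₐ[k] l) * τ = 1 := by
    rcases hτ (τ * τ) with h | h
    · exact congrArg Subtype.val h
    · exact absurd (mul_eq_left.1 h) hτ1
  have hτfix : ∀ x : l3, (τ : l ≃ₐ[k] l) (x : l) = x := fun x =>
    (IntermediateField.mem_fixingSubgroup_iff _ _).1 τ.2 x x.2
  let θ := conjAux σ φ hφk
  have hθi : Function.Injective θ := by
    intro a b hab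
    ext x
    have := DFunLike.congr_fun hab (φ x)
    simpa [θ, conjAux_apply] using this
  have hθτ : θ τ = τ := by
    have hmem : θ τ ∈ l3.fixingSubgroup := by
      rw [IntermediateField.mem_fixingSubgroup_iff]
      intro x hx
      have := hφs ⟨x, hx⟩
      simp only at this
      simp [θ, conjAux_apply, this, hτfix, hφ]
    rcases hτ ⟨_, hmem⟩ with h | h
    · exact absurd (hθi ((congrArg Subtype.val h).trans (map_one θ).symm)) hτ1'
    · exact congrArg Subtype.val h
  have hθφ : ∀ γ x, φ (γ x) = θ γ (φ x) := fun γ x => by simp [θ, conjAux_apply]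
  -- existence
  obtain ⟨β₀, hb1, hb2, hb3⟩ : ∃ β₀ : l ≃+* l, (∀ x : l3, β₀ (x : l) = (β x : l3)) ∧
      (∀ a, β₀ (algebraMap k l a) = algebraMap k l (σ a)) ∧
      ∀ (γ : l ≃ₐ[k] l) (x : l), β₀ (γ x) = γ (β₀ x) := by
    rcases grp_inj e θ hθi τ hτ1' hττ hθτ with h | h
    · exact ⟨φ, hφ, hφk, fun γ x => by rw [hθφ, h]⟩
    · refine ⟨φ.trans (τ : l ≃ₐ[k] l).toRingEquiv, fun x => ?_, fun a => ?_, fun γ x => ?_⟩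
      · change (τ : l ≃ₐ[k] l) (φ x) = _
        rw [hφ, hτfix]
      · change (τ : l ≃ₐ[k] l) (φ _) = _
        rw [hφk, AlgEquiv.commutes]
      · change (τ : l ≃ₐ[k] l) (φ (γ x)) = γ ((τ : l ≃ₐ[k] l) (φ x))
        rw [hθφ, h]
        have : (τ : l ≃ₐ[k] l) * (τ * γ * τ) = γ * τ := by
          rw [← mul_assoc, ← mul_assoc, hττ, one_mul]
        exact DFunLike.congr_fun this (φ x)
  refine ⟨β₀, ⟨hb1, ?_, hb3⟩, ?_⟩
  · ext y
    constructor
    · rintro ⟨_, ⟨a, rfl⟩, rfl⟩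
      exact ⟨σ a, (hb2 a).symm⟩
    · rintro ⟨a, rfl⟩
      exact ⟨_, ⟨σ.symm a, rfl⟩, (hb2 _).trans (by simp)⟩
  · rintro β₁ ⟨hc1, -, hc3⟩
    let δ : l ≃ₐ[k] l := AlgEquiv.ofRingEquiv (f := β₁.trans β₀.symm) (by
      intro a
      have h1 := hb1 (algebraMap k l3 a)
      have h2 := hc1 (algebraMap k l3 a)
      change β₀.symm (β₁ (algebraMap k l a)) = _
      rw [RingEquiv.symm_apply_eq]
      exact h2.trans h1.symm)
    have hδ : ∀ x, δ x = β₀.symm (β₁ x) := fun x => rfl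
    have hδc : ∀ γ : l ≃ₐ[k] l, δ * γ = γ * δ := by
      intro γ
      ext x
      change δ (γ x) = γ (δ x)
      rw [hδ, hδ, RingEquiv.symm_apply_eq, hb3, hc3]
      simp
    have hδ1 : δ = 1 := by
      apply e.injective
      rw [map_one]
      apply s3_center
      intro x
      obtain ⟨γ, rfl⟩ := e.surjective x
      rw [← map_mul, hδc, map_mul]
    ext x
    have := hδ x
    rw [hδ1, AlgEquiv.one_apply, eq_comm, RingEquiv.symm_apply_eq] at this
    exact this
end
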